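/- Fix real constants a_R > 0 and a_I, and set p₁ = q₁ = a_R/(a_R²+a_I²), p₂ = −q₂ = −a_I/(a_R²+a_I²). Let b_R, b_I, f_R, f_I : [0,1]×[0,1) → ℝ be continuously differentiable in the space variable and such that, for each fixed space point, each is given on [0,1) by a power series in t whose coefficients are bounded uniformly in n and in the space variable. Define β(x,y,t) = [a_R(b_R(y,t)−f_R(x,t)) + a_I(b_I(y,t)−f_I(x,t))]/(a_R²+a_I²) and β_c(x,y,t) = [a_R(b_I(y,t)−f_I(x,t)) − a_I(b_R(y,t)−f_R(x,t))]/(a_R²+a_I²). Then for every t₀ ∈ (0,1), the system k_xx = k_yy + βk + β_c k_c + p₁k_t + p₂k_{c,t}, k_{c,xx} = k_{c,yy} − β_c k + βk_c + q₁k_{c,t} + q₂k_t on Ω = {(x,y) : 0 ≤ y ≤ x ≤ 1}, with boundary conditions k(x,x,t) = −(1/2)∫₀ˣ β(γ,γ,t)dγ, k_c(x,x,t) = (1/2)∫₀ˣ β_c(γ,γ,t)dγ, k(x,0,t) = 0, k_c(x,0,t) = 0, has a unique solution (k, k_c), twice continuously differentiable in (x,y), on Ω×(0,t₀), and there exists M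 > 0 such that |k(x,y,t)| ≤ M e^{M(x²−y²)} and |k_c(x,y,t)| ≤ M e^{M(x²−y²)} on Ω×(0,t₀). -/

import Mathlib

open Set intervalIntegral

/-- The triangle `Ω = {(x,y) : 0 ≤ y ≤ x ≤ 1}`. -/
def Omega : Set (ℝ × ℝ) := {p : ℝ × ℝ | 0 ≤ p.2 ∧ p.2 ≤ p.1 ∧ p.1 ≤ 1}

/-- Second partial derivative in the first variable. -/
noncomputable def pXX (k : ℝ → ℝ → ℝ → ℝ) (x y t : ℝ) : ℝ :=
  deriv (fun x' => deriv (fun x'' => k x'' y t) x') x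

/-- Second partial derivative in the second variable. -/
noncomputable def pYY (k : ℝ → ℝ → ℝ → ℝ) (x y t : ℝ) : ℝ :=
  deriv (fun y' => deriv (fun y'' => k x y'' t) y') y

/-- Partial derivative in the last (time) variable. -/
noncomputable def pT (k : ℝ → ℝ → ℝ → ℝ) (x y t : ℝ) : ℝ := deriv (fun t' => k x y t') t

/-- `f(x,t)` is continuously differentiable in the space variable and, for each fixed
space point, given on `[0,1)` by a power series in `t` with coefficients bounded
uniformly in `n` and in the space variable. -/
def SpaceC1TimeAnalytic (f : ℝ → ℝ → ℝ) : Prop :=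
  (∀ t ∈ Set.Ico (0:ℝ) 1, ContDiffOn ℝ 1 (fun x => f x t) (Set.Icc 0 1))
  ∧ ∃ (c : ℕ → ℝ → ℝ) (C : ℝ),
      (∀ n, ∀ x ∈ Set.Icc (0:ℝ) 1, |c n x| ≤ C)
      ∧ ∀ x ∈ Set.Icc (0:ℝ) 1, ∀ t ∈ Set.Ico (0:ℝ) 1, f x t = ∑' n, c n x * t ^ n

/-- `(k, k_c)` is a twice continuously differentiable (in `(x,y)`, and differentiable
in `t`) solution on `Ω × (0,t₀)` of the Dirichlet backstepping kernel system. -/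
def IsDirichletKernelSol (β βc : ℝ → ℝ → ℝ → ℝ) (p₁ p₂ q₁ q₂ t₀ : ℝ)
    (k kc : ℝ → ℝ → ℝ → ℝ) : Prop :=
  (∀ t ∈ Set.Ioo (0:ℝ) t₀, ContDiffOn ℝ 2 (fun p : ℝ × ℝ => k p.1 p.2 t) Omega)
  ∧ (∀ t ∈ Set.Ioo (0:ℝ) t₀, ContDiffOn ℝ 2 (fun p : ℝ × ℝ => kc p.1 p.2 t) Omega)
  ∧ (∀ x y : ℝ, (x, y) ∈ Omega → ∀ t ∈ Set.Ioo (0:ℝ) t₀,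
      DifferentiableAt ℝ (fun t' => k x y t') t ∧ DifferentiableAt ℝ (fun t' => kc x y t') t)
  ∧ (∀ x y : ℝ, (x, y) ∈ Omega → ∀ t ∈ Set.Ioo (0:ℝ) t₀,
      pXX k x y t
        = pYY k x y t + β x y t * k x y t + βc x y t * kc x y t
          + p₁ * pT k x y t + p₂ * pT kc x y t
      ∧ pXX kc x y t
        = pYY kc x y t - βc x y t * k x y t + β x y t * kc x y t
          + q₁ * pT kc x y t + q₂ * pT k x y t)
  ∧ (∀ x ∈ Set.Icc (0:ℝ) 1, ∀ t ∈ Set.Ioo (0:ℝ) t₀,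
      k x x t = -(1 / 2) * ∫ γ in (0:ℝ)..x, β γ γ t
      ∧ kc x x t = (1 / 2) * ∫ γ in (0:ℝ)..x, βc γ γ t
      ∧ k x 0 t = 0 ∧ kc x 0 t = 0)

/-!
The complex kernel `w = k + i k_c` satisfies the single equation `w_xx - w_yy = b w + c w_t`, where
`b = β - i β_c` and `c ≠ 0` is a constant; in the characteristic coordinates `ξ = x + y`,
`η = x - y` this is the Goursat problem `4 w_ξη = b w + c w_t` with `w = 0` on the diagonal and
`w_ξ = -b / 4` on `η = 0`.

*Existence.* The coefficients extend holomorphically to `|t| < 1`, so the time derivative, the only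
unbounded operator of the problem, can be handled by Nagumo's form of Cauchy's estimate: a bound
`C (1 - |t|) ^ (-k)` for a function gives the bound `e (k + 2) C (1 - |t|) ^ (-k - 1)` for its
derivative. The factor lost at the `m`-th Picard iterate is of order `m`, whereas the two
integrations gain `m⁻²`, so the Picard series converges locally uniformly to a holomorphic family.

*Uniqueness.* Solutions are only differentiable in time, so this argument is not available for the
difference `v` of two of them. By Baire's theorem every open set of times contains an interval on
which `v` is bounded and Lipschitz in time. There the equation can be tested in time against
`φ ^ n h`, where `h` is holomorphic and `φ(t) = (t - α) (β - t)`. The time derivative then falls on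
the test function, where Cauchy's estimate applies to `h`, and `m` steps, with `n = m`, bound
`∫ v φ ^ m` by `C ^ m / m!`. But the powers of `φ` concentrate at its maximum, the midpoint of the
interval, and decay only geometrically, so `v` vanishes there, hence on a dense set of times.
-/

open Filter Topology Function
open Metric (ball closedBall sphere)

/-! ### Holomorphic families -/

lemma hasDerivAt_intervalIntegral_of_continuousOn {𝕜 E : Type*} [RCLike 𝕜] [NormedAddCommGroup E]
    [NormedSpace ℝ E] [NormedSpace 𝕜 E] {F F' : 𝕜 → ℝ → E} {U : Set 𝕜} {a b : ℝ} {z₀ : 𝕜}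
    (hU : IsOpen U) (hF : ∀ z ∈ U, ContinuousOn (F z) (uIcc a b))
    (hF' : ContinuousOn (uncurry F') (U ×ˢ uIcc a b))
    (h : ∀ z ∈ U, ∀ t ∈ uIcc a b, HasDerivAt (fun z => F z t) (F' z t) z) (hz₀ : z₀ ∈ U) :
    HasDerivAt (fun z => ∫ t in a..b, F z t) (∫ t in a..b, F' z₀ t) z₀ := by
  obtain ⟨r, hr, hrU⟩ := Metric.nhds_basis_closedBall.mem_iff.1 (hU.mem_nhds hz₀)
  obtain ⟨C, hC⟩ := ((isCompact_closedBall z₀ r).prod isCompact_uIcc).exists_bound_of_continuousOn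
    (hF'.mono (prod_mono_left hrU))
  have hsub : uIoc a b ⊆ uIcc a b := uIoc_subset_uIcc
  refine (hasDerivAt_integral_of_dominated_loc_of_deriv_le (F' := F') (bound := fun _ => C)
    (Metric.closedBall_mem_nhds z₀ hr)
    (eventually_of_mem (hU.mem_nhds hz₀) fun z hz =>
      ((hF z hz).mono hsub).aestronglyMeasurable measurableSet_uIoc)
    (hF z₀ hz₀).intervalIntegrable
    (ContinuousOn.aestronglyMeasurable (hF'.comp (by fun_prop : Continuous fun t => (z₀, t)
      ).continuousOn fun t ht => ⟨hz₀, hsub ht⟩) measurableSet_uIoc)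
    (.of_forall fun t ht z hz => hC (z, t) ⟨hz, hsub ht⟩) intervalIntegrable_const
    (.of_forall fun t ht z hz => h z (hrU hz) t (hsub ht))).2

/-- A jointly continuous family of holomorphic functions on `U`, indexed by a topological space. -/
structure IsHolomorphicFamily {X : Type*} [TopologicalSpace X] (U : Set ℂ) (f : X → ℂ → ℂ) :
    Prop where
  continuousOn : ContinuousOn (uncurry f) (univ ×ˢ U)
  differentiableOn (x : X) : DifferentiableOn ℂ (f x) U

/-- Local domination of a series of families of functions on `U` by convergent numerical series. -/
def LocallyNormallySummable {X ι : Type*} [TopologicalSpace X] (U : Set ℂ)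
    (f : ι → X → ℂ → ℂ) : Prop :=
  ∀ x, ∀ z ∈ U, ∃ V ∈ 𝓝 (x, z), ∃ u : ι → ℝ, Summable u ∧ ∀ n, ∀ q ∈ V, ‖f n q.1 q.2‖ ≤ u n

namespace LocallyNormallySummable

variable {X ι : Type*} [TopologicalSpace X] {U : Set ℂ} {f : ι → X → ℂ → ℂ}

lemma summable (h : LocallyNormallySummable U f) (x : X) {z : ℂ} (hz : z ∈ U) :
    Summable fun n => f n x z := by
  obtain ⟨V, hV, u, hu, hfu⟩ := h x z hz
  exact .of_norm_bounded hu fun n => hfu n _ (mem_of_mem_nhds hV)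

lemma exists_isOpen (h : LocallyNormallySummable U f) (hU : IsOpen U) (x : X) {z : ℂ}
    (hz : z ∈ U) : ∃ V ⊆ U, IsOpen V ∧ z ∈ V ∧
      ∃ u : ι → ℝ, Summable u ∧ ∀ n, ∀ w ∈ V, ‖f n x w‖ ≤ u n := by
  obtain ⟨V, hV, u, hu, hfu⟩ := h x z hz
  obtain ⟨V', hV', hV'o, hzV'⟩ := mem_nhds_iff.1
    (inter_mem (hU.mem_nhds hz) ((Continuous.prodMk_right x).continuousAt hV))
  exact ⟨V', fun w hw => (hV' hw).1, hV'o, hzV', u, hu, fun n w hw => hfu n _ (hV' hw).2⟩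

lemma hasSum_deriv (h : LocallyNormallySummable U f) (hU : IsOpen U)
    (hf : ∀ n x, DifferentiableOn ℂ (f n x) U) (x : X) {z : ℂ} (hz : z ∈ U) :
    HasSum (fun n => deriv (f n x) z) (deriv (fun w => ∑' n, f n x w) z) := by
  obtain ⟨V, hVU, hV, hzV, u, hu, hfu⟩ := h.exists_isOpen hU x hz
  exact Complex.hasSum_deriv_of_summable_norm hu (fun n => (hf n x).mono hVU) hV hfu hzV

lemma isHolomorphicFamily_tsum (h : LocallyNormallySummable U f) (hU : IsOpen U)
    (hf : ∀ n, IsHolomorphicFamily U (f n)) :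
    IsHolomorphicFamily U fun x z => ∑' n, f n x z := by
  refine ⟨fun ⟨x, z⟩ ⟨_, hz⟩ => ?_, fun x z hz => ?_⟩
  · obtain ⟨V, hV, u, hu, hfu⟩ := h x z hz
    have hUn : univ ×ˢ U ∈ 𝓝 (x, z) := (isOpen_univ.prod hU).mem_nhds ⟨trivial, hz⟩
    exact ((continuousOn_tsum (fun n => (hf n).continuousOn.mono inter_subset_left) hu
      fun n q hq => hfu n q hq.2).continuousAt (inter_mem hUn hV)).continuousWithinAt
  · obtain ⟨V, hVU, hV, hzV, u, hu, hfu⟩ := h.exists_isOpen hU x hz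
    exact ((Complex.differentiableOn_tsum_of_summable_norm hu
      (fun n => ((hf n).differentiableOn x).mono hVU) hV hfu).differentiableAt
        (hV.mem_nhds hzV)).differentiableWithinAt

end LocallyNormallySummable

namespace IsHolomorphicFamily

variable {X Y : Type*} [TopologicalSpace X] [TopologicalSpace Y] {U : Set ℂ} {f g : X → ℂ → ℂ}

lemma continuous_apply (hf : IsHolomorphicFamily U f) {z : ℂ} (hz : z ∈ U) :
    Continuous fun x => f x z :=
  hf.continuousOn.comp_continuous (f := fun x => (x, z)) (by fun_prop) fun _ => ⟨trivial, hz⟩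

lemma hasDerivAt (hf : IsHolomorphicFamily U f) (hU : IsOpen U) (x : X) {z : ℂ} (hz : z ∈ U) :
    HasDerivAt (f x) (deriv (f x) z) z :=
  ((hf.differentiableOn x).differentiableAt (hU.mem_nhds hz)).hasDerivAt

lemma add (hf : IsHolomorphicFamily U f) (hg : IsHolomorphicFamily U g) :
    IsHolomorphicFamily U fun x z => f x z + g x z :=
  ⟨hf.continuousOn.add hg.continuousOn,
    fun x => (hf.differentiableOn x).add (hg.differentiableOn x)⟩

lemma mul (hf : IsHolomorphicFamily U f) (hg : IsHolomorphicFamily U g) :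
    IsHolomorphicFamily U fun x z => f x z * g x z :=
  ⟨hf.continuousOn.mul hg.continuousOn,
    fun x => (hf.differentiableOn x).mul (hg.differentiableOn x)⟩

lemma const_mul (hf : IsHolomorphicFamily U f) (a : ℂ) :
    IsHolomorphicFamily U fun x z => a * f x z :=
  ⟨continuousOn_const.mul hf.continuousOn, fun x => (hf.differentiableOn x).const_mul a⟩

lemma comp (hf : IsHolomorphicFamily U f) {φ : Y → X} (hφ : Continuous φ) :
    IsHolomorphicFamily U fun y => f (φ y) :=
  ⟨hf.continuousOn.comp (f := fun q : Y × ℂ => (φ q.1, q.2)) (by fun_prop)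
    fun _ hq => ⟨trivial, hq.2⟩, fun y => hf.differentiableOn (φ y)⟩

lemma tendstoLocallyUniformlyOn (hf : IsHolomorphicFamily U f) (hU : IsOpen U) (x : X) :
    TendstoLocallyUniformlyOn f (f x) (𝓝 x) U := by
  rw [tendstoLocallyUniformlyOn_iff_forall_isCompact hU]
  intro K hKU hK u hu
  obtain ⟨v, hv, hvu⟩ := hK.mem_uniformity_of_prod
    (hf.continuousOn.mono (prod_mono_right hKU)) (mem_univ x) (symm_le_uniformity hu)
  rw [nhdsWithin_univ] at hv
  exact eventually_of_mem hv hvu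

lemma deriv (hf : IsHolomorphicFamily U f) (hU : IsOpen U) :
    IsHolomorphicFamily U fun x => deriv (f x) := by
  have hd x := (hf.differentiableOn x).deriv hU
  refine ⟨fun ⟨x, z⟩ ⟨_, hz⟩ => ?_, hd⟩
  have hlim := ((hf.tendstoLocallyUniformlyOn hU x).deriv (.of_forall hf.differentiableOn) hU)
  have hlim' : TendstoLocallyUniformlyOn (fun q : X × ℂ => _root_.deriv (f q.1))
      (_root_.deriv (f x)) (𝓝 x ×ˢ 𝓝[U] z) U := fun u hu y hy =>
    (hlim u hu y hy).imp fun t ht => ⟨ht.1, tendsto_fst.eventually ht.2⟩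
  rw [ContinuousWithinAt, nhdsWithin_prod_eq, nhdsWithin_univ]
  exact hlim'.tendsto_comp ((hd x).continuousOn z hz) hz tendsto_snd

section integral

variable {f : X × ℝ → ℂ → ℂ} {u v : X → ℝ}

lemma hasDerivAt_integral (hf : IsHolomorphicFamily U f) (hU : IsOpen U) (x : X) (a b : ℝ) {z : ℂ}
    (hz : z ∈ U) : HasDerivAt (fun z => ∫ s in a..b, f (x, s) z)
      (∫ s in a..b, _root_.deriv (f (x, s)) z) z :=
  hasDerivAt_intervalIntegral_of_continuousOn (F' := fun z s => _root_.deriv (f (x, s)) z) hU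
    (fun _ hw => ((hf.continuous_apply hw).comp (Continuous.prodMk_right x)).continuousOn)
    ((hf.deriv hU).continuousOn.comp (f := fun q : ℂ × ℝ => ((x, q.2), q.1)) (by fun_prop)
      fun _ hq => ⟨trivial, hq.1⟩)
    (fun _ hw s _ => hf.hasDerivAt hU (x, s) hw) hz

lemma deriv_integral (hf : IsHolomorphicFamily U f) (hU : IsOpen U) (x : X) (a b : ℝ) {z : ℂ}
    (hz : z ∈ U) : _root_.deriv (fun z => ∫ s in a..b, f (x, s) z) z
      = ∫ s in a..b, _root_.deriv (f (x, s)) z :=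
  (hf.hasDerivAt_integral hU x a b hz).deriv

lemma integral (hf : IsHolomorphicFamily U f) (hU : IsOpen U)
    (hu : Continuous u) (hv : Continuous v) :
    IsHolomorphicFamily U fun x z => ∫ s in u x..v x, f (x, s) z := by
  refine ⟨?_, fun x z hz =>
    (hf.hasDerivAt_integral hU x _ _ hz).differentiableAt.differentiableWithinAt⟩
  have hF : Continuous (uncurry fun (q : (univ ×ˢ U : Set (X × ℂ))) (s : ℝ) =>
      f (q.1.1, s) q.1.2) :=
    hf.continuousOn.comp_continuous (by fun_prop :
      Continuous fun p : (univ ×ˢ U : Set (X × ℂ)) × ℝ => ((p.1.1.1, p.2), p.1.1.2))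
      fun p => ⟨trivial, p.1.2.2⟩
  rw [continuousOn_iff_continuous_domRestrict]
  have hint (q : (univ ×ˢ U : Set (X × ℂ))) (a b : ℝ) : IntervalIntegrable
      (fun s => f (q.1.1, s) q.1.2) MeasureTheory.volume a b :=
    (hF.comp (Continuous.prodMk_right q)).intervalIntegrable a b
  have heq : (univ ×ˢ U).domRestrict (uncurry fun x z => ∫ s in u x..v x, f (x, s) z)
      = fun q => (∫ s in (0 : ℝ)..v q.1.1, f (q.1.1, s) q.1.2)
        - ∫ s in (0 : ℝ)..u q.1.1, f (q.1.1, s) q.1.2 := by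
    funext q
    exact (integral_interval_sub_left (hint q _ _) (hint q _ _)).symm
  rw [heq]
  exact (continuous_parametric_intervalIntegral_of_continuous hF (by fun_prop)).sub
    (continuous_parametric_intervalIntegral_of_continuous hF (by fun_prop))

end integral

end IsHolomorphicFamily

lemma norm_deriv_le_of_norm_le_div_one_sub_norm_pow {f : ℂ → ℂ} {C : ℝ} {k : ℕ}
    (hf : DifferentiableOn ℂ f (ball 0 1))
    (hC : ∀ z ∈ ball (0 : ℂ) 1, ‖f z‖ ≤ C / (1 - ‖z‖) ^ k) {z : ℂ} (hz : z ∈ ball (0 : ℂ) 1) :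
    ‖deriv f z‖ ≤ Real.exp 1 * (k + 2) * C / (1 - ‖z‖) ^ (k + 1) := by
  have hd : 0 < 1 - ‖z‖ := by simpa using hz
  have hC0 : 0 ≤ C := by simpa using (norm_nonneg _).trans (hC 0 (by simp))
  -- Cauchy's estimate on the circle whose radius is the fraction `1 / (k + 2)` of `1 - ‖z‖`
  set r : ℝ := (1 - ‖z‖) / (k + 2)
  have hr : 0 < r := by positivity
  have hrd : 1 - ‖z‖ = (k + 2) * r := by simp only [r]; field_simp
  have hdist : ∀ w ∈ closedBall z r, (k + 1) * r ≤ 1 - ‖w‖ := fun w hw => by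
    have := norm_le_norm_add_norm_sub' w z
    rw [mem_closedBall_iff_norm] at hw
    linarith
  have hsub : closedBall z r ⊆ ball 0 1 := fun w hw => by
    have := hdist w hw
    rw [mem_ball_zero_iff]
    nlinarith [Nat.cast_nonneg (α := ℝ) k]
  have hpow : (1 - ‖z‖) ^ k ≤ Real.exp 1 * ((k + 1) * r) ^ k := by
    have hfac : 1 - ‖z‖ = (1 + ((k + 1 : ℕ) : ℝ)⁻¹) * ((k + 1) * r) := by
      rw [hrd]; push_cast; field
    rw [hfac, mul_pow]
    gcongr
    refine (pow_le_pow_right₀ ?_ k.le_succ).trans Real.one_add_inv_pow_le_exp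
    exact le_add_of_nonneg_right (by positivity)
  have hbound : ∀ w ∈ sphere z r, ‖f w‖ ≤ Real.exp 1 * C / (1 - ‖z‖) ^ k := fun w hw => by
    have hw := Metric.sphere_subset_closedBall hw
    refine (hC w (hsub hw)).trans ?_
    have hw1 : 0 < 1 - ‖w‖ := (by positivity : 0 < (k + 1) * r).trans_le (hdist w hw)
    rw [div_le_div_iff₀ (by positivity) (by positivity), mul_comm (Real.exp 1), mul_assoc]
    gcongr
    exact hpow.trans (by gcongr; exact hdist w hw)
  refine (Complex.norm_deriv_le_of_forall_mem_sphere_norm_le hr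
    (hf.diffContOnCl_ball hsub) hbound).trans_eq ?_
  rw [pow_succ, hrd]
  field

/-! ### The characteristic Goursat problem -/

section planeCalculus

variable {E : Type*} [NormedAddCommGroup E] [NormedSpace ℝ E] {f f₁ f₂ g : ℝ × ℝ → E}

lemma hasFDerivAt_of_continuous_partials
    (h₁ : ∀ p : ℝ × ℝ, HasDerivAt (fun x => f (x, p.2)) (f₁ p) p.1)
    (h₂ : ∀ p : ℝ × ℝ, HasDerivAt (fun y => f (p.1, y)) (f₂ p) p.2)
    (c₁ : Continuous f₁) (c₂ : Continuous f₂) (p : ℝ × ℝ) :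
    HasFDerivAt f ((ContinuousLinearMap.fst ℝ ℝ ℝ).smulRight (f₁ p)
      + (ContinuousLinearMap.snd ℝ ℝ ℝ).smulRight (f₂ p)) p := by
  have := (hasStrictFDerivAt_uncurry_coprod (𝕜 := ℝ) (u := p) (f := fun x y => f (x, y))
    (f₁ := fun x y => (1 : ℝ →L[ℝ] ℝ).smulRight (f₁ (x, y)))
    (f₂ := fun x y => (1 : ℝ →L[ℝ] ℝ).smulRight (f₂ (x, y)))
    (.of_forall fun q => (h₁ q).hasFDerivAt) (.of_forall fun q => (h₂ q).hasFDerivAt)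
    ((ContinuousLinearMap.smulRightL ℝ ℝ E 1).continuous.comp c₁).continuousAt
    ((ContinuousLinearMap.smulRightL ℝ ℝ E 1).continuous.comp c₂).continuousAt).hasFDerivAt
  refine this.congr_fderiv ?_
  ext <;> simp [Function.HasUncurry.uncurry]

lemma contDiff_succ_of_partials {n : ℕ}
    (h₁ : ∀ p : ℝ × ℝ, HasDerivAt (fun x => f (x, p.2)) (f₁ p) p.1)
    (h₂ : ∀ p : ℝ × ℝ, HasDerivAt (fun y => f (p.1, y)) (f₂ p) p.2)
    (c₁ : ContDiff ℝ n f₁) (c₂ : ContDiff ℝ n f₂) : ContDiff ℝ (n + 1) f :=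
  contDiff_succ_iff_hasFDerivAt.2 ⟨_,
    ((ContinuousLinearMap.smulRightL ℝ (ℝ × ℝ) E (ContinuousLinearMap.fst ℝ ℝ ℝ)).contDiff.comp
      c₁).add ((ContinuousLinearMap.smulRightL ℝ (ℝ × ℝ) E
        (ContinuousLinearMap.snd ℝ ℝ ℝ)).contDiff.comp c₂),
    hasFDerivAt_of_continuous_partials h₁ h₂ c₁.continuous c₂.continuous⟩

/-- The mixed second derivative `∂₂∂₁ g` of a function on the plane. -/
noncomputable def mixedDeriv (g : ℝ × ℝ → E) (p : ℝ × ℝ) : E :=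
  fderiv ℝ (fderiv ℝ g) p (0, 1) (1, 0)

lemma hasDerivAt_fderiv_apply_comp {p e e' : ℝ × ℝ} {l : ℝ → ℝ × ℝ} {z : ℝ}
    (hg : ContDiffAt ℝ 2 g p) (hl : HasDerivAt l e' z) (hz : l z = p) :
    HasDerivAt (fun z => fderiv ℝ g (l z) e) (fderiv ℝ (fderiv ℝ g) p e' e) z := by
  subst hz
  have h2 : HasFDerivAt (fderiv ℝ g) (fderiv ℝ (fderiv ℝ g) (l z)) (l z) :=
    ((hg.fderiv_right (m := 1) (by norm_num)).differentiableAt one_ne_zero).hasFDerivAt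
  exact (ContinuousLinearMap.apply ℝ E e).hasFDerivAt.comp_hasDerivAt z (h2.comp_hasDerivAt z hl)

lemma hasDerivAt_deriv_comp {p e : ℝ × ℝ} {l : ℝ → ℝ × ℝ} {z : ℝ} (hg : ContDiffAt ℝ 2 g p)
    (hl : ∀ z, HasDerivAt l e z) (hz : l z = p) :
    HasDerivAt (deriv fun z => g (l z)) (fderiv ℝ (fderiv ℝ g) p e e) z := by
  refine (hasDerivAt_fderiv_apply_comp hg (hl z) hz).congr_of_eventuallyEq ?_
  have hev := (hg.eventually (by simp)).mono fun q hq => hq.differentiableAt two_ne_zero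
  filter_upwards [(hl z).continuousAt.eventually (hz ▸ hev)] with z' hz'
  exact (hz'.hasFDerivAt.comp_hasDerivAt z' (hl z')).deriv

lemma deriv_deriv_sub_deriv_deriv_eq_four_mixedDeriv {x y : ℝ}
    (hg : ContDiffAt ℝ 2 g (x + y, x - y)) :
    deriv (deriv fun x => g (x + y, x - y)) x - deriv (deriv fun y => g (x + y, x - y)) y
      = (4 : ℝ) • mixedDeriv g (x + y, x - y) := by
  have hX (x : ℝ) : HasDerivAt (fun x => (x + y, x - y)) ((1, 1) : ℝ × ℝ) x :=
    ((hasDerivAt_id x).add_const y).prodMk ((hasDerivAt_id x).sub_const y)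
  have hY (y : ℝ) : HasDerivAt (fun y => (x + y, x - y)) ((1, -1) : ℝ × ℝ) y :=
    ((hasDerivAt_id y).const_add x).prodMk ((hasDerivAt_id y).const_sub x)
  rw [(hasDerivAt_deriv_comp hg hX rfl).deriv, (hasDerivAt_deriv_comp hg hY rfl).deriv, mixedDeriv]
  set T := fderiv ℝ (fderiv ℝ g) (x + y, x - y)
  have hsymm : T (1, 0) (0, 1) = T (0, 1) (1, 0) := hg.isSymmSndFDerivAt (by simp) _ _
  rw [show ((1, 1) : ℝ × ℝ) = (1, 0) + (0, 1) by simp,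
    show ((1, -1) : ℝ × ℝ) = (1, 0) - (0, 1) by simp]
  simp only [map_add, map_sub, add_apply, sub_apply, hsymm]
  module

lemma mixedDeriv_eq_of_hasDerivAt {g' : E} {p : ℝ × ℝ} (hg : ContDiff ℝ 2 g)
    (h₁ : ∀ p : ℝ × ℝ, HasDerivAt (fun x => g (x, p.2)) (f₁ p) p.1)
    (h₂ : HasDerivAt (fun y => f₁ (p.1, y)) g' p.2) : mixedDeriv g p = g' := by
  refine (hasDerivAt_fderiv_apply_comp hg.contDiffAt
    ((hasDerivAt_const p.2 p.1).prodMk (hasDerivAt_id p.2)) rfl).unique ?_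
  refine h₂.congr_of_eventuallyEq (.of_forall fun y => ?_)
  have hg1 := (hg.differentiable two_ne_zero (p.1, y)).hasFDerivAt
  exact (hg1.comp_hasDerivAt p.1
    ((hasDerivAt_id p.1).prodMk (hasDerivAt_const p.1 y))).unique (h₁ (p.1, y))

end planeCalculus

lemma hasDerivAt_integral_of_continuous {E : Type*} [NormedAddCommGroup E] [NormedSpace ℝ E]
    [CompleteSpace E] {f : ℝ → E} (hf : Continuous f) (a x : ℝ) :
    HasDerivAt (fun x => ∫ τ in a..x, f τ) (f x) x :=
  integral_hasDerivAt_right (hf.intervalIntegrable _ _) (hf.stronglyMeasurableAtFilter _ _)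
    hf.continuousAt

lemma contDiff_integral {E : Type*} [NormedAddCommGroup E] [NormedSpace ℝ E] [CompleteSpace E]
    {f : ℝ → E} {n : ℕ} (hf : ContDiff ℝ n f) (a : ℝ) :
    ContDiff ℝ (n + 1) fun x => ∫ τ in a..x, f τ := by
  have h := hasDerivAt_integral_of_continuous hf.continuous a
  rw [contDiff_succ_iff_deriv]
  exact ⟨fun x => (h x).differentiableAt, by simp, by rwa [funext fun x => (h x).deriv]⟩

/-- The integral of `f` in the first variable, from `0`. -/
noncomputable def primFst (f : ℝ × ℝ → ℂ) (p : ℝ × ℝ) : ℂ := ∫ τ in (0 : ℝ)..p.1, f (τ, p.2)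

/-- The integral of `f` in the second variable, from `0`. -/
noncomputable def primSnd (f : ℝ × ℝ → ℂ) (p : ℝ × ℝ) : ℂ := ∫ s in (0 : ℝ)..p.2, f (p.1, s)

section primitives

variable {f : ℝ × ℝ → ℂ}

lemma continuous_primFst (hf : Continuous f) : Continuous (primFst f) :=
  continuous_parametric_intervalIntegral_of_continuous
    (f := fun (p : ℝ × ℝ) τ => f (τ, p.2)) (by fun_prop) continuous_fst

lemma hasDerivAt_primFst (hf : Continuous f) (p : ℝ × ℝ) :
    HasDerivAt (fun x => primFst f (x, p.2)) (f p) p.1 :=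
  hasDerivAt_integral_of_continuous (f := fun τ => f (τ, p.2)) (by fun_prop) 0 p.1

lemma continuous_primSnd (hf : Continuous f) : Continuous (primSnd f) :=
  (continuous_primFst (hf.comp continuous_swap)).comp continuous_swap

lemma hasDerivAt_primSnd (hf : Continuous f) (p : ℝ × ℝ) :
    HasDerivAt (fun y => primSnd f (p.1, y)) (f p) p.2 :=
  hasDerivAt_primFst (hf.comp continuous_swap) p.swap

lemma primFst_primSnd_comm (hf : Continuous f) (p : ℝ × ℝ) :
    primFst (primSnd f) p = primSnd (primFst f) p := by
  refine MeasureTheory.intervalIntegral_intervalIntegral_swap ?_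
  have : MeasureTheory.IntegrableOn f (uIcc 0 p.1 ×ˢ uIcc 0 p.2) :=
    hf.continuousOn.integrableOn_compact (isCompact_uIcc.prod isCompact_uIcc)
  exact this.mono_set (prod_mono uIoc_subset_uIcc uIoc_subset_uIcc)

lemma contDiff_one_primFst (hf : ContDiff ℝ 1 f) : ContDiff ℝ 1 (primFst f) := by
  have hf₂ : Continuous fun p => fderiv ℝ f p (0, 1) :=
    (hf.continuous_fderiv one_ne_zero).clm_apply continuous_const
  have hsnd (p : ℝ × ℝ) : HasDerivAt (fun y => f (p.1, y)) (fderiv ℝ f p (0, 1)) p.2 :=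
    (hf.differentiable one_ne_zero p).hasFDerivAt.comp_hasDerivAt p.2
      ((hasDerivAt_const p.2 p.1).prodMk (hasDerivAt_id p.2))
  have hc := hf.continuous
  simpa using contDiff_succ_of_partials (n := 0) (hasDerivAt_primFst hc)
    (f₂ := primFst fun p => fderiv ℝ f p (0, 1))
    (fun p => hasDerivAt_intervalIntegral_of_continuousOn (U := univ)
      (F := fun y τ => f (τ, y)) (F' := fun y τ => fderiv ℝ f (τ, y) (0, 1)) isOpen_univ
      (fun y _ => (by fun_prop : Continuous fun τ => f (τ, y)).continuousOn)
      (hf₂.comp continuous_swap).continuousOn (fun y _ τ _ => hsnd (τ, y)) (mem_univ _))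
    (by simpa using hc) (by simpa using continuous_primFst hf₂)

lemma contDiff_one_primSnd (hf : ContDiff ℝ 1 f) : ContDiff ℝ 1 (primSnd f) :=
  (contDiff_one_primFst (hf.comp (contDiff_snd.prodMk contDiff_fst))).comp
    (contDiff_snd.prodMk contDiff_fst)

lemma contDiff_primFst_primSnd {n : ℕ} (hf : Continuous f)
    (h₁ : ContDiff ℝ n (primSnd f)) (h₂ : ContDiff ℝ n (primFst f)) :
    ContDiff ℝ (n + 1) (primFst (primSnd f)) := by
  refine contDiff_succ_of_partials (hasDerivAt_primFst (continuous_primSnd hf)) (fun p => ?_) h₁ h₂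
  simp only [primFst_primSnd_comm hf]
  exact hasDerivAt_primSnd (continuous_primFst hf) p

end primitives

/-- The solution of the Goursat problem `∂₁∂₂ w = F` which vanishes on the diagonal and has the
derivative `D` along the first axis. -/
noncomputable def goursat (D : ℝ → ℂ) (F : ℝ × ℝ → ℂ) (p : ℝ × ℝ) : ℂ :=
  ∫ τ in p.2..p.1, D τ + ∫ s in (0 : ℝ)..p.2, F (τ, s)

section goursat

variable {D : ℝ → ℂ} {F : ℝ × ℝ → ℂ}

@[simp]
lemma goursat_self (x : ℝ) : goursat D F (x, x) = 0 := integral_same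

lemma goursat_zero_right (x : ℝ) : goursat D F (x, 0) = ∫ τ in (0 : ℝ)..x, D τ := by
  simp [goursat]

lemma goursat_eq_primitives (hD : Continuous D) (hF : Continuous F) : goursat D F = fun p =>
    (∫ τ in (0 : ℝ)..p.1, D τ) + primFst (primSnd F) p
      - ((∫ τ in (0 : ℝ)..p.2, D τ) + primFst (primSnd F) (p.2, p.2)) := by
  funext p
  have hS : Continuous fun τ => primSnd F (τ, p.2) := (continuous_primSnd hF).comp (by fun_prop)
  have hadd (a : ℝ) : ∫ τ in (0 : ℝ)..a, D τ + primSnd F (τ, p.2)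
      = (∫ τ in (0 : ℝ)..a, D τ) + primFst (primSnd F) (a, p.2) :=
    integral_add (hD.intervalIntegrable _ _) (hS.intervalIntegrable _ _)
  rw [← hadd, ← hadd]
  exact (integral_interval_sub_left ((hD.add hS).intervalIntegrable _ _)
    ((hD.add hS).intervalIntegrable _ _)).symm

lemma goursat_eq_add (hD : Continuous D) (hF : Continuous F) (p : ℝ × ℝ) :
    goursat D F p = goursat D 0 p + goursat 0 F p := by
  have hS : Continuous fun τ => primSnd F (τ, p.2) := (continuous_primSnd hF).comp (by fun_prop)
  simp only [goursat, Pi.zero_apply, integral_zero, add_zero, zero_add]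
  exact integral_add (hD.intervalIntegrable _ _) (hS.intervalIntegrable _ _)

lemma contDiff_succ_goursat {n : ℕ} (hD : ContDiff ℝ n D) (hF : Continuous F)
    (h₁ : ContDiff ℝ n (primSnd F)) (h₂ : ContDiff ℝ n (primFst F)) :
    ContDiff ℝ (n + 1) (goursat D F) := by
  have hR := contDiff_primFst_primSnd hF h₁ h₂
  have hA := contDiff_integral hD 0
  rw [goursat_eq_primitives hD.continuous hF]
  exact ((hA.comp contDiff_fst).add hR).sub
    ((hA.comp contDiff_snd).add (hR.comp (contDiff_snd.prodMk contDiff_snd)))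

lemma contDiff_one_goursat (hD : Continuous D) (hF : Continuous F) :
    ContDiff ℝ 1 (goursat D F) := by
  simpa using contDiff_succ_goursat (n := 0) (by simpa using hD) hF
    (by simpa using continuous_primSnd hF) (by simpa using continuous_primFst hF)

lemma contDiff_two_goursat (hD : ContDiff ℝ 1 D) (hF : ContDiff ℝ 1 F) :
    ContDiff ℝ 2 (goursat D F) := by
  simpa [one_add_one_eq_two] using contDiff_succ_goursat (n := 1) hD hF.continuous
    (contDiff_one_primSnd hF) (contDiff_one_primFst hF)

lemma mixedDeriv_goursat (hD : ContDiff ℝ 1 D) (hF : ContDiff ℝ 1 F) (p : ℝ × ℝ) :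
    mixedDeriv (goursat D F) p = F p :=
  mixedDeriv_eq_of_hasDerivAt (f₁ := fun p => D p.1 + primSnd F p) (contDiff_two_goursat hD hF)
    (fun p => hasDerivAt_integral_of_continuous (f := fun τ => D τ + primSnd F (τ, p.2))
      (hD.continuous.add ((continuous_primSnd hF.continuous).comp (by fun_prop))) p.2 p.1)
    ((hasDerivAt_primSnd hF.continuous p).const_add (D p.1))

end goursat

/-- The weight `|η| (|ξ - η| + |η|)` at `p = (ξ, η)`, equal to `ξ η` when `0 ≤ η ≤ ξ`; its powers
control the iterates of the Goursat integral. -/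
def goursatWeight (p : ℝ × ℝ) : ℝ := |p.2| * (|p.1 - p.2| + |p.2|)

/-- The rectangle with opposite corners `(η, 0)` and `p = (ξ, η)`. -/
def goursatRect (p : ℝ × ℝ) : Set (ℝ × ℝ) := uIcc p.2 p.1 ×ˢ uIcc 0 p.2

lemma abs_integral_abs_sub_add_pow_le {r : ℝ} (hr : 0 ≤ r) (a b : ℝ) (m : ℕ) :
    |∫ s in a..b, (|s - a| + r) ^ m| ≤ (|b - a| + r) ^ (m + 1) / (m + 1) := by
  wlog hab : a ≤ b generalizing b
  · have hreflect := integral_comp_sub_left (fun s => (|s - a| + r) ^ m) (a := b) (b := a) (2 * a)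
    simp only [show ∀ s, |2 * a - s - a| = |s - a| from fun s => by
      rw [abs_sub_comm s a]; ring_nf, show 2 * a - a = a by ring] at hreflect
    rw [integral_symm, hreflect, abs_neg]
    convert this (2 * a - b) (by linarith) using 3
    rw [abs_sub_comm b a]
    ring_nf
  have hshift : ∫ s in a..b, (|s - a| + r) ^ m = ∫ s in a..b, (s + (r - a)) ^ m := by
    refine integral_congr fun s hs => ?_
    rw [uIcc_of_le hab] at hs
    simp only [abs_of_nonneg (sub_nonneg.2 hs.1)]
    ring
  have hpow : r ^ (m + 1) ≤ (b - a + r) ^ (m + 1) := by gcongr; linarith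
  rw [hshift, integral_comp_add_right (fun s => s ^ m), integral_pow,
    abs_of_nonneg (sub_nonneg.2 hab), add_sub_cancel, add_sub_left_comm, ← add_sub_assoc,
    add_comm r, add_sub_right_comm, abs_of_nonneg (by have := sub_nonneg.2 hpow; positivity)]
  gcongr
  exact sub_le_self _ (by positivity)

lemma norm_integral_le_of_norm_le_mul_pow {f : ℝ → ℂ} {a b r C : ℝ} {m : ℕ} (hr : 0 ≤ r)
    (hC : 0 ≤ C) (hf : ∀ s ∈ uIcc a b, ‖f s‖ ≤ C * (|s - a| + r) ^ m) :
    ‖∫ s in a..b, f s‖ ≤ C * ((|b - a| + r) ^ (m + 1) / (m + 1)) := by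
  have hg : Continuous fun s => C * (|s - a| + r) ^ m := by fun_prop
  refine (norm_integral_le_abs_of_norm_le (MeasureTheory.ae_restrict_of_forall_mem
    measurableSet_uIoc fun s hs => hf s (uIoc_subset_uIcc hs)) (hg.intervalIntegrable _ _)).trans ?_
  rw [integral_const_mul, abs_mul, abs_of_nonneg hC]
  gcongr
  exact abs_integral_abs_sub_add_pow_le hr a b m

lemma goursatWeight_nonneg (p : ℝ × ℝ) : 0 ≤ goursatWeight p := by
  unfold goursatWeight; positivity

lemma norm_goursat_le {F : ℝ × ℝ → ℂ} {C : ℝ} {m : ℕ} (hC : 0 ≤ C) {p : ℝ × ℝ}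
    (hF : ∀ q ∈ goursatRect p, ‖F q‖ ≤ C * goursatWeight q ^ m) :
    ‖goursat 0 F p‖ ≤ C * goursatWeight p ^ (m + 1) / (m + 1) ^ 2 := by
  have hweight : ∀ τ, ∀ s ∈ uIcc 0 p.2, goursatWeight (τ, s) ≤ |s| * (|τ - p.2| + |p.2|) := by
    intro τ s hs
    have hsplit : |p.2 - s| + |s| = |p.2| := by
      rcases mem_uIcc.1 hs with ⟨h0, h⟩ | ⟨h, h0⟩
      · rw [abs_of_nonneg h0, abs_of_nonneg (sub_nonneg.2 h), abs_of_nonneg (h0.trans h)]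
        ring
      · rw [abs_of_nonpos h0, abs_of_nonpos (sub_nonpos.2 h), abs_of_nonpos (h.trans h0)]
        ring
    refine mul_le_mul_of_nonneg_left ?_ (abs_nonneg s)
    linarith [abs_sub_le τ p.2 s]
  have hinner : ∀ τ ∈ uIcc p.2 p.1, ‖∫ s in (0 : ℝ)..p.2, F (τ, s)‖
      ≤ C * |p.2| ^ (m + 1) / (m + 1) * (|τ - p.2| + |p.2|) ^ m := fun τ hτ => by
    refine (norm_integral_le_of_norm_le_mul_pow (r := 0) (m := m)
      (C := C * (|τ - p.2| + |p.2|) ^ m) le_rfl (by positivity) fun s hs => ?_).trans_eq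
        (by simp only [sub_zero, add_zero]; ring)
    refine (hF (τ, s) ⟨hτ, hs⟩).trans ?_
    rw [sub_zero, add_zero, mul_assoc, ← mul_pow, mul_comm _ |s|]
    exact mul_le_mul_of_nonneg_left
      (pow_le_pow_left₀ (goursatWeight_nonneg _) (hweight τ s hs) m) hC
  simp only [goursat, Pi.zero_apply, zero_add]
  refine (norm_integral_le_of_norm_le_mul_pow (abs_nonneg p.2) (by positivity) hinner).trans_eq ?_
  rw [goursatWeight, mul_pow]
  field_simp

section goursatFamily

variable {D : ℝ → ℂ → ℂ} {F : ℝ × ℝ → ℂ → ℂ} {U : Set ℂ}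

lemma isHolomorphicFamily_goursat_integrand (hU : IsOpen U) (hD : IsHolomorphicFamily U D)
    (hF : IsHolomorphicFamily U F) : IsHolomorphicFamily U
      fun (q : (ℝ × ℝ) × ℝ) z => D q.2 z + ∫ s in (0 : ℝ)..q.1.2, F (q.2, s) z :=
  (hD.comp continuous_snd).add
    ((hF.comp (φ := fun r : ((ℝ × ℝ) × ℝ) × ℝ => (r.1.2, r.2)) (by fun_prop)).integral hU
      continuous_const (by fun_prop))

lemma isHolomorphicFamily_goursat (hU : IsOpen U) (hD : IsHolomorphicFamily U D)
    (hF : IsHolomorphicFamily U F) :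
    IsHolomorphicFamily U fun p z => goursat (fun τ => D τ z) (fun q => F q z) p :=
  (isHolomorphicFamily_goursat_integrand hU hD hF).integral hU continuous_snd continuous_fst

lemma deriv_goursat (hU : IsOpen U) (hD : IsHolomorphicFamily U D) (hF : IsHolomorphicFamily U F)
    {z : ℂ} (hz : z ∈ U) (p : ℝ × ℝ) :
    deriv (fun z => goursat (fun τ => D τ z) (fun q => F q z) p) z
      = goursat (fun τ => deriv (D τ) z) (fun q => deriv (F q) z) p := by
  refine ((isHolomorphicFamily_goursat_integrand hU hD hF).deriv_integral hU p p.2 p.1 hz).trans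
    (integral_congr fun τ _ => ?_)
  refine ((hD.hasDerivAt hU τ hz).add ?_).deriv
  exact (hF.comp (φ := fun r : ℝ × ℝ => (τ, r.2)) (by fun_prop)).hasDerivAt_integral hU 0 0 p.2 hz

end goursatFamily

lemma hasSum_goursat {F : ℕ → ℝ × ℝ → ℂ} {u : ℕ → ℝ} {p : ℝ × ℝ} (hF : ∀ m, Continuous (F m))
    (hu : Summable u) (hFu : ∀ m, ∀ q ∈ goursatRect p, ‖F m q‖ ≤ u m) :
    HasSum (fun m => goursat 0 (F m) p) (goursat 0 (fun q => ∑' m, F m q) p) := by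
  have hinner : ∀ τ ∈ uIcc p.2 p.1, HasSum (fun m => ∫ s in (0 : ℝ)..p.2, F m (τ, s))
      (∫ s in (0 : ℝ)..p.2, ∑' m, F m (τ, s)) := fun τ hτ =>
    hasSum_integral_of_dominated_convergence (fun m _ => u m)
      (fun m => ((hF m).comp (Continuous.prodMk_right τ)).aestronglyMeasurable)
      (fun m => .of_forall fun s hs => hFu m (τ, s) ⟨hτ, uIoc_subset_uIcc hs⟩)
      (.of_forall fun _ _ => hu) intervalIntegrable_const
      (.of_forall fun s hs => (Summable.of_norm_bounded hu fun m =>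
        hFu m (τ, s) ⟨hτ, uIoc_subset_uIcc hs⟩).hasSum)
  simp only [goursat, Pi.zero_apply, zero_add]
  refine hasSum_integral_of_dominated_convergence (fun m _ => u m * |p.2 - 0|)
    (fun m => ?_) (fun m => .of_forall fun τ hτ => ?_) (.of_forall fun _ _ => hu.mul_right _)
    intervalIntegrable_const (.of_forall fun τ hτ => hinner τ (uIoc_subset_uIcc hτ))
  · exact (continuous_parametric_intervalIntegral_of_continuous' (f := fun τ s => F m (τ, s))
      (hF m) 0 p.2).aestronglyMeasurable
  · exact norm_integral_le_of_norm_le_const fun s hs =>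
      hFu m (τ, s) ⟨uIoc_subset_uIcc hτ, uIoc_subset_uIcc hs⟩

lemma norm_le_of_mem_goursatRect {p q : ℝ × ℝ} (hq : q ∈ goursatRect p) : ‖q‖ ≤ ‖p‖ := by
  have h₁ := abs_le.1 (norm_fst_le p)
  have h₂ := abs_le.1 (norm_snd_le p)
  exact max_le (abs_le.2 (uIcc_subset_Icc h₂ h₁ hq.1))
    (abs_le.2 (uIcc_subset_Icc (by simp) h₂ hq.2))

lemma goursatWeight_le_three_mul_norm_sq (p : ℝ × ℝ) : goursatWeight p ≤ 3 * ‖p‖ ^ 2 := by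
  have h₁ : |p.1| ≤ ‖p‖ := norm_fst_le p
  have h₂ : |p.2| ≤ ‖p‖ := norm_snd_le p
  have := abs_sub p.1 p.2
  calc goursatWeight p ≤ ‖p‖ * (‖p‖ + ‖p‖ + ‖p‖) := by unfold goursatWeight; gcongr; linarith
    _ = 3 * ‖p‖ ^ 2 := by ring

/-! ### Existence -/

/-- The right-hand side of the complexified kernel equation in characteristic coordinates,
`∂₁∂₂ w = (b w + c ∂_z w) / 4`, for a family `w` of functions of complex time `z`. -/
noncomputable def kernelSource (b : ℝ × ℝ → ℂ → ℂ) (c : ℂ) (w : ℝ × ℝ → ℂ → ℂ) (p : ℝ × ℝ)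
    (z : ℂ) : ℂ :=
  (b p z * w p z + c * deriv (w p) z) / 4

/-- The terms of the Picard series of the complexified kernel equation in characteristic
coordinates, the derivative on the first axis being prescribed as `-b / 4`. -/
noncomputable def kernelTerm (b : ℝ × ℝ → ℂ → ℂ) (c : ℂ) : ℕ → ℝ × ℝ → ℂ → ℂ
  | 0 => fun p z => goursat (fun τ => -b (τ, 0) z / 4) 0 p
  | m + 1 => fun p z => goursat 0 (fun q => kernelSource b c (kernelTerm b c m) q z) p

section existence

variable {b w : ℝ × ℝ → ℂ → ℂ} {c : ℂ} {B : ℝ}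

lemma isHolomorphicFamily_kernelSource (hb : IsHolomorphicFamily (ball 0 1) b)
    (hw : IsHolomorphicFamily (ball 0 1) w) (c : ℂ) :
    IsHolomorphicFamily (ball 0 1) fun p z => kernelSource b c w p z := by
  unfold kernelSource
  have := ((hb.mul hw).add ((hw.deriv Metric.isOpen_ball).const_mul c)).const_mul 4⁻¹
  simpa only [div_eq_inv_mul] using this

lemma isHolomorphicFamily_neg_div_four (hb : IsHolomorphicFamily (ball 0 1) b) :
    IsHolomorphicFamily (ball 0 1) fun (τ : ℝ) z => -b (τ, 0) z / 4 := by
  have := (hb.comp (φ := fun τ : ℝ => (τ, (0 : ℝ))) (by fun_prop)).const_mul (-4⁻¹)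
  simpa only [neg_div, div_eq_inv_mul, neg_mul, mul_neg] using this

lemma isHolomorphicFamily_kernelTerm (hb : IsHolomorphicFamily (ball 0 1) b) (c : ℂ) (m : ℕ) :
    IsHolomorphicFamily (ball 0 1) (kernelTerm b c m) := by
  have hzero {X : Type} [TopologicalSpace X] :
    IsHolomorphicFamily (ball 0 1) (fun (_ : X) (_ : ℂ) => (0 : ℂ)) :=
    ⟨continuousOn_const, fun _ => differentiableOn_const 0⟩
  induction m with
  | zero =>
    exact isHolomorphicFamily_goursat Metric.isOpen_ball (isHolomorphicFamily_neg_div_four hb) hzero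
  | succ m ih =>
    exact isHolomorphicFamily_goursat Metric.isOpen_ball hzero
      (isHolomorphicFamily_kernelSource hb ih c)

lemma norm_kernelSource_le (hB : ∀ p, ∀ z ∈ ball (0 : ℂ) 1, ‖b p z‖ ≤ B / (1 - ‖z‖)) {p : ℝ × ℝ}
    (hw : DifferentiableOn ℂ (w p) (ball 0 1)) {A : ℝ} {m : ℕ}
    (hA : ∀ z ∈ ball (0 : ℂ) 1, ‖w p z‖ ≤ A / (1 - ‖z‖) ^ (m + 1)) {z : ℂ}
    (hz : z ∈ ball (0 : ℂ) 1) : ‖kernelSource b c w p z‖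
      ≤ (B + 3 * Real.exp 1 * ‖c‖) * (m + 1) * A / (1 - ‖z‖) ^ (m + 2) := by
  have hd : 0 < 1 - ‖z‖ := by simpa using hz
  have hA0 : 0 ≤ A := by simpa using (norm_nonneg _).trans (hA 0 (by simp))
  have hB0 : 0 ≤ B := by simpa using (norm_nonneg _).trans (hB p 0 (by simp))
  have hderiv := norm_deriv_le_of_norm_le_div_one_sub_norm_pow hw hA hz
  calc ‖kernelSource b c w p z‖ ≤ ‖b p z * w p z + c * deriv (w p) z‖ := by
        rw [kernelSource, norm_div]
        exact div_le_self (norm_nonneg _) (by norm_num)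
    _ ≤ B / (1 - ‖z‖) * (A / (1 - ‖z‖) ^ (m + 1))
        + ‖c‖ * (Real.exp 1 * ((m + 1 : ℕ) + 2) * A / (1 - ‖z‖) ^ (m + 1 + 1)) := by
      refine (norm_add_le _ _).trans ?_
      rw [norm_mul, norm_mul]
      gcongr
      exacts [hB p z hz, hA z hz]
    _ = (B + Real.exp 1 * ‖c‖ * (m + 3)) * A / (1 - ‖z‖) ^ (m + 2) := by
      push_cast
      field
    _ ≤ _ := by
      gcongr
      have := Real.exp_pos 1
      have hm : (0 : ℝ) ≤ m := m.cast_nonneg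
      have hc : 0 ≤ Real.exp 1 * ‖c‖ := by positivity
      nlinarith [mul_nonneg hB0 hm, mul_nonneg hc hm]

variable (hb : IsHolomorphicFamily (ball 0 1) b)
  (hB : ∀ p, ∀ z ∈ ball (0 : ℂ) 1, ‖b p z‖ ≤ B / (1 - ‖z‖))
include hb hB

lemma norm_kernelTerm_le (m : ℕ) (p : ℝ × ℝ) {z : ℂ} (hz : z ∈ ball (0 : ℂ) 1) :
    ‖kernelTerm b c m p z‖ ≤ B * ‖p‖ * (B + 3 * Real.exp 1 * ‖c‖) ^ m * goursatWeight p ^ m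
      / m.factorial / (1 - ‖z‖) ^ (m + 1) := by
  have hB0 : 0 ≤ B := by simpa using (norm_nonneg _).trans (hB p 0 (by simp))
  induction m generalizing p z with
  | zero =>
    have hd : 0 < 1 - ‖z‖ := by simpa using hz
    have hle : ‖kernelTerm b c 0 p z‖ ≤ B / (1 - ‖z‖) / 4 * |p.1 - p.2| := by
      simp only [kernelTerm, goursat, Pi.zero_apply, integral_zero, add_zero]
      refine norm_integral_le_of_norm_le_const fun τ _ => ?_
      rw [norm_div, norm_neg]
      simpa using div_le_div_of_nonneg_right (hB (τ, 0) z hz) (by norm_num : (0 : ℝ) ≤ 4)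
    have hsub : |p.1 - p.2| ≤ 4 * ‖p‖ := by
      have h₁ : |p.1| ≤ ‖p‖ := norm_fst_le p
      have h₂ : |p.2| ≤ ‖p‖ := norm_snd_le p
      linarith [abs_sub p.1 p.2, norm_nonneg p]
    calc _ ≤ B / (1 - ‖z‖) / 4 * (4 * ‖p‖) := hle.trans (by gcongr)
      _ = _ := by simp; field
  | succ m ih =>
    have hd : 0 < 1 - ‖z‖ := by simpa using hz
    set K := B + 3 * Real.exp 1 * ‖c‖
    refine (norm_goursat_le (m := m)
      (C := K * (m + 1) * (B * ‖p‖ * K ^ m / m.factorial) / (1 - ‖z‖) ^ (m + 2))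
      (by positivity) fun q hq => ?_).trans_eq ?_
    · refine (norm_kernelSource_le hB ((isHolomorphicFamily_kernelTerm hb c m).differentiableOn q)
        (fun z hz => ih q hz) hz).trans ?_
      have := goursatWeight_nonneg q
      have := norm_le_of_mem_goursatRect hq
      calc _ ≤ K * (m + 1) * (B * ‖p‖ * K ^ m * goursatWeight q ^ m / m.factorial)
            / (1 - ‖z‖) ^ (m + 2) := by gcongr
        _ = _ := by ring
    · rw [Nat.factorial_succ]
      push_cast
      field

lemma locallyNormallySummable_kernelTerm :
    LocallyNormallySummable (ball 0 1) (kernelTerm b c) := by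
  intro p z hz
  have hB0 : 0 ≤ B := by simpa using (norm_nonneg _).trans (hB p 0 (by simp))
  obtain ⟨ρ, hzρ, hρ⟩ := exists_between (mem_ball_zero_iff.1 hz)
  set K := B + 3 * Real.exp 1 * ‖c‖
  set R := ‖p‖ + 1
  have hρ0 : 0 < 1 - ρ := sub_pos.2 hρ
  refine ⟨ball 0 R ×ˢ ball 0 ρ, prod_mem_nhds
    (Metric.isOpen_ball.mem_nhds (by simp [R])) (Metric.isOpen_ball.mem_nhds (by simpa)),
    fun m => B * R / (1 - ρ) * ((K * (3 * R ^ 2) / (1 - ρ)) ^ m / m.factorial),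
    (Real.summable_pow_div_factorial _).mul_left _, fun m q hq => ?_⟩
  have hqR : ‖q.1‖ ≤ R := (mem_ball_zero_iff.1 hq.1).le
  have hqρ : ‖q.2‖ < ρ := mem_ball_zero_iff.1 hq.2
  have hW : goursatWeight q.1 ≤ 3 * R ^ 2 :=
    (goursatWeight_le_three_mul_norm_sq q.1).trans (by gcongr)
  have := goursatWeight_nonneg q.1
  calc ‖kernelTerm b c m q.1 q.2‖
      ≤ B * ‖q.1‖ * K ^ m * goursatWeight q.1 ^ m / m.factorial / (1 - ‖q.2‖) ^ (m + 1) :=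
        norm_kernelTerm_le hb hB m q.1 (mem_ball_zero_iff.2 (hqρ.trans hρ))
    _ ≤ B * R * K ^ m * (3 * R ^ 2) ^ m / m.factorial / (1 - ρ) ^ (m + 1) := by gcongr
    _ = _ := by simp only [mul_pow, div_pow]; field

lemma exists_summable_norm_kernelSource_kernelTerm_le (p : ℝ × ℝ) {z : ℂ}
    (hz : z ∈ ball (0 : ℂ) 1) : ∃ u : ℕ → ℝ, Summable u ∧
      ∀ m, ∀ q ∈ goursatRect p, ‖kernelSource b c (kernelTerm b c m) q z‖ ≤ u m := by
  have hB0 : 0 ≤ B := by simpa using (norm_nonneg _).trans (hB p 0 (by simp))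
  have hd : 0 < 1 - ‖z‖ := by simpa using hz
  set K := B + 3 * Real.exp 1 * ‖c‖
  refine ⟨fun m => K * B * ‖p‖ / (1 - ‖z‖) ^ 2
    * ((2 * (K * (3 * ‖p‖ ^ 2) / (1 - ‖z‖))) ^ m / m.factorial),
    (Real.summable_pow_div_factorial _).mul_left _, fun m q hq => ?_⟩
  have hqp := norm_le_of_mem_goursatRect hq
  have hW : goursatWeight q ≤ 3 * ‖p‖ ^ 2 :=
    (goursatWeight_le_three_mul_norm_sq q).trans (by gcongr)
  have := goursatWeight_nonneg q
  have htwo : (m + 1 : ℝ) ≤ 2 ^ m := mod_cast m.lt_two_pow_self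
  calc ‖kernelSource b c (kernelTerm b c m) q z‖
      ≤ K * (m + 1) * (B * ‖q‖ * K ^ m * goursatWeight q ^ m / m.factorial)
        / (1 - ‖z‖) ^ (m + 2) := norm_kernelSource_le hB
          ((isHolomorphicFamily_kernelTerm hb c m).differentiableOn q)
          (fun z hz => norm_kernelTerm_le hb hB m q hz) hz
    _ ≤ K * 2 ^ m * (B * ‖p‖ * K ^ m * (3 * ‖p‖ ^ 2) ^ m / m.factorial)
        / (1 - ‖z‖) ^ (m + 2) := by gcongr
    _ = _ := by simp only [mul_pow, div_pow]; field

theorem exists_isHolomorphicFamily_eq_goursat (c : ℂ) :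
    ∃ w : ℝ × ℝ → ℂ → ℂ, IsHolomorphicFamily (ball 0 1) w ∧ ∀ z ∈ ball (0 : ℂ) 1, ∀ p,
      w p z = goursat (fun τ => -b (τ, 0) z / 4) (fun q => kernelSource b c w q z) p := by
  have hterm := isHolomorphicFamily_kernelTerm hb c
  have hsum := locallyNormallySummable_kernelTerm (c := c) hb hB
  have hw := hsum.isHolomorphicFamily_tsum Metric.isOpen_ball hterm
  refine ⟨_, hw, fun z hz p => ?_⟩
  set w : ℝ × ℝ → ℂ → ℂ := fun p z => ∑' m, kernelTerm b c m p z
  have hsource (q : ℝ × ℝ) :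
      ∑' m, kernelSource b c (kernelTerm b c m) q z = kernelSource b c w q z :=
    ((((hsum.summable q hz).hasSum.mul_left (b q z)).add
      ((hsum.hasSum_deriv Metric.isOpen_ball (fun m => (hterm m).differentiableOn) q hz).mul_left
        c)).div_const 4).tsum_eq
  obtain ⟨u, hu, hle⟩ := exists_summable_norm_kernelSource_kernelTerm_le (c := c) hb hB p hz
  have hsucc := hasSum_goursat (fun m =>
    (isHolomorphicFamily_kernelSource hb (hterm m) c).continuous_apply hz) hu hle
  have hterms : w p z = kernelTerm b c 0 p z + ∑' m, kernelTerm b c (m + 1) p z :=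
    (hsum.summable p hz).tsum_eq_zero_add
  change w p z = _
  rw [hterms, goursat_eq_add ((isHolomorphicFamily_neg_div_four hb).continuous_apply hz)
    ((isHolomorphicFamily_kernelSource hb hw c).continuous_apply hz)]
  exact congrArg _ (hsucc.tsum_eq.trans (by simp only [hsource]))

omit hB in
lemma contDiff_two_of_eq_goursat (hw : IsHolomorphicFamily (ball 0 1) w)
    (heq : ∀ z ∈ ball (0 : ℂ) 1, ∀ p,
      w p z = goursat (fun τ => -b (τ, 0) z / 4) (fun q => kernelSource b c w q z) p)
    {z : ℂ} (hz : z ∈ ball (0 : ℂ) 1) (hbz : ContDiff ℝ 1 fun p => b p z) :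
    ContDiff ℝ 2 (fun p => w p z)
      ∧ ∀ p, mixedDeriv (fun p => w p z) p = kernelSource b c w p z := by
  have hS := isHolomorphicFamily_kernelSource hb hw c
  have hb₀ := isHolomorphicFamily_neg_div_four hb
  have hw1 : ContDiff ℝ 1 fun p => w p z := by
    rw [funext (heq z hz)]
    exact contDiff_one_goursat (hb₀.continuous_apply hz) (hS.continuous_apply hz)
  have hdw1 : ContDiff ℝ 1 fun p => deriv (w p) z := by
    have hderiv (p : ℝ × ℝ) := (EventuallyEq.deriv_eq (eventually_of_mem
      (Metric.isOpen_ball.mem_nhds hz) fun z hz => heq z hz p)).trans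
        (deriv_goursat Metric.isOpen_ball hb₀ hS hz p)
    rw [funext hderiv]
    exact contDiff_one_goursat ((hb₀.deriv Metric.isOpen_ball).continuous_apply hz)
      ((hS.deriv Metric.isOpen_ball).continuous_apply hz)
  have hS1 : ContDiff ℝ 1 fun p => kernelSource b c w p z :=
    ((hbz.mul hw1).add (contDiff_const.mul hdw1)).div_const 4
  have hb1 : ContDiff ℝ 1 fun τ : ℝ => -b (τ, 0) z / 4 :=
    ((hbz.comp (contDiff_id.prodMk contDiff_const)).neg).div_const 4
  rw [funext (heq z hz)]
  exact ⟨contDiff_two_goursat hb1 hS1, mixedDeriv_goursat hb1 hS1⟩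

end existence

/-! ### The coefficients -/

section powerSeries

variable {X : Type*} {C : ℝ}

lemma summable_mul_pow_of_norm_le {a : ℕ → ℂ} (ha : ∀ n, ‖a n‖ ≤ C) {z : ℂ}
    (hz : z ∈ ball (0 : ℂ) 1) : Summable fun n => a n * z ^ n := by
  refine .of_norm_bounded ((summable_geometric_of_lt_one (norm_nonneg z)
    (mem_ball_zero_iff.1 hz)).mul_left C) fun n => ?_
  rw [norm_mul, norm_pow]
  gcongr
  exact ha n

lemma norm_tsum_mul_pow_le {a : ℕ → ℂ} (ha : ∀ n, ‖a n‖ ≤ C) {z : ℂ} (hz : z ∈ ball (0 : ℂ) 1) :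
    ‖∑' n, a n * z ^ n‖ ≤ C / (1 - ‖z‖) := by
  refine tsum_of_norm_bounded ((hasSum_geometric_of_lt_one (norm_nonneg z)
    (mem_ball_zero_iff.1 hz)).mul_left C) fun n => ?_
  rw [norm_mul, norm_pow]
  gcongr
  exact ha n

lemma tsum_mul_pow_eq_add_mul {a : ℕ → ℂ} (ha : ∀ n, ‖a n‖ ≤ C) {z : ℂ}
    (hz : z ∈ ball (0 : ℂ) 1) :
    ∑' n, a n * z ^ n = a 0 + z * ∑' n, a (n + 1) * z ^ n := by
  rw [(summable_mul_pow_of_norm_le ha hz).tsum_eq_zero_add, pow_zero, mul_one, ← tsum_mul_left]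
  exact congrArg _ (tsum_congr fun n => by ring)

variable [TopologicalSpace X] {a : ℕ → X → ℂ}

lemma isHolomorphicFamily_tsum_mul_pow (ha : ∀ n, Continuous (a n)) (hC : ∀ n x, ‖a n x‖ ≤ C) :
    IsHolomorphicFamily (ball 0 1) fun x z => ∑' n, a n x * z ^ n := by
  refine LocallyNormallySummable.isHolomorphicFamily_tsum (fun x z hz => ?_) Metric.isOpen_ball
    fun n => ⟨(((ha n).comp continuous_fst).mul (continuous_snd.pow n)).continuousOn,
      fun x => (by fun_prop)⟩
  obtain ⟨ρ, hzρ, hρ⟩ := exists_between (mem_ball_zero_iff.1 hz)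
  refine ⟨univ ×ˢ ball 0 ρ, prod_mem_nhds univ_mem (Metric.isOpen_ball.mem_nhds (by simpa)),
    fun n => C * ρ ^ n,
    (summable_geometric_of_lt_one ((norm_nonneg z).trans hzρ.le) hρ).mul_left C, fun n q hq => ?_⟩
  have hC0 : 0 ≤ C := (norm_nonneg _).trans (hC 0 x)
  rw [norm_mul, norm_pow]
  exact mul_le_mul (hC n q.1) (pow_le_pow_left₀ (norm_nonneg _) (mem_ball_zero_iff.1 hq.2).le n)
    (by positivity) hC0

variable {S : Set X}

lemma continuousOn_coeff_zero (hC : ∀ n, ∀ x ∈ S, ‖a n x‖ ≤ C)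
    (hc : ∀ t ∈ Ioo (0 : ℝ) 1, ContinuousOn (fun x => ∑' n, a n x * (t : ℂ) ^ n) S) :
    ContinuousOn (a 0) S := by
  have hev : ∀ᶠ t : ℝ in 𝓝[>] 0, t ∈ Ioo (0 : ℝ) 1 := Ioo_mem_nhdsGT one_pos
  have hlim : Tendsto (fun t : ℝ => t * (C / (1 - t))) (𝓝[>] 0) (𝓝 0) := by
    have : ContinuousAt (fun t : ℝ => t * (C / (1 - t))) 0 := by fun_prop (disch := norm_num)
    simpa using this.tendsto.mono_left nhdsWithin_le_nhds
  refine TendstoUniformlyOn.continuousOn (F := fun t x => ∑' n, a n x * ((t : ℝ) : ℂ) ^ n)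
    (p := 𝓝[>] (0 : ℝ)) ?_ (hev.mono hc).frequently
  rw [Metric.tendstoUniformlyOn_iff]
  intro ε hε
  filter_upwards [hev, hlim.eventually (gt_mem_nhds hε)] with t ht hlt x hx
  have htn : ‖(t : ℂ)‖ = t := by simp [abs_of_pos ht.1]
  have htb : (t : ℂ) ∈ ball (0 : ℂ) 1 := by simpa only [mem_ball_zero_iff, htn] using ht.2
  rw [dist_comm, dist_eq_norm, tsum_mul_pow_eq_add_mul (fun n => hC n x hx) htb,
    add_sub_cancel_left, norm_mul, htn]
  refine lt_of_le_of_lt ?_ hlt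
  have := norm_tsum_mul_pow_le (fun n => hC (n + 1) x hx) htb
  rw [htn] at this
  exact mul_le_mul_of_nonneg_left this ht.1.le

lemma continuousOn_coeff (n : ℕ) (hC : ∀ n, ∀ x ∈ S, ‖a n x‖ ≤ C)
    (hc : ∀ t ∈ Ioo (0 : ℝ) 1, ContinuousOn (fun x => ∑' n, a n x * (t : ℂ) ^ n) S) :
    ContinuousOn (a n) S := by
  induction n generalizing a with
  | zero => exact continuousOn_coeff_zero hC hc
  | succ _ ih =>
    refine ih (a := fun n => a (n + 1)) (fun n => hC (n + 1)) fun t ht => ?_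
    have htb : (t : ℂ) ∈ ball (0 : ℂ) 1 := by simpa [abs_of_pos ht.1] using ht.2
    have ht0 : (t : ℂ) ≠ 0 := mod_cast ht.1.ne'
    refine (((hc t ht).sub (continuousOn_coeff_zero hC hc)).div_const (t : ℂ)).congr fun x hx => ?_
    change _ = ((∑' n, a n x * (t : ℂ) ^ n) - a 0 x) / t
    rw [tsum_mul_pow_eq_add_mul (fun n => hC n x hx) htb, add_sub_cancel_left,
      mul_div_cancel_left₀ _ ht0]

end powerSeries

section extension

variable {E : Type*} [NormedAddCommGroup E]

lemma contDiff_one_comp_max_zero [NormedSpace ℝ E] [CompleteSpace E] {A : ℝ → E}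
    (hA : ContDiff ℝ 1 A) (h0 : A 0 = 0) (h1 : deriv A 0 = 0) :
    ContDiff ℝ 1 fun x => A (max 0 x) := by
  have hA' := hA.continuous_deriv le_rfl
  have heq (x : ℝ) : A (max 0 x) = ∫ s in (0 : ℝ)..x, deriv A (max 0 s) := by
    rcases le_total 0 x with hx | hx
    · rw [integral_congr (g := deriv A) fun s hs => by
        rw [uIcc_of_le hx] at hs; simp only [max_eq_right hs.1],
        integral_deriv_eq_sub (fun s _ => hA.differentiable one_ne_zero s)
          (hA'.intervalIntegrable _ _), h0, max_eq_right hx, sub_zero]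
    · rw [integral_congr (g := fun _ => 0) fun s hs => by
        rw [uIcc_of_ge hx] at hs; simp only [max_eq_left hs.2, h1], integral_zero,
        max_eq_left hx, h0]
  rw [funext heq]
  simpa using contDiff_integral (n := 0)
    (by simpa using (by fun_prop : Continuous fun s => deriv A (max 0 s))) 0

lemma exists_contDiff_one_eqOn_Icc [NormedSpace ℝ E] [CompleteSpace E] {f : ℝ → E}
    (hf : ContDiffOn ℝ 1 f (Icc 0 1)) : ∃ g : ℝ → E, ContDiff ℝ 1 g ∧ EqOn g f (Icc 0 1) := by
  have hc : ContinuousOn (derivWithin f (Icc 0 1)) (Icc 0 1) :=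
    hf.continuousOn_derivWithin (uniqueDiffOn_Icc one_pos) le_rfl
  set d : ℝ → E := IccExtend zero_le_one ((Icc (0 : ℝ) 1).domRestrict (derivWithin f (Icc 0 1)))
  have hd : Continuous d := (continuousOn_iff_continuous_domRestrict.1 hc).Icc_extend'
  refine ⟨fun x => f 0 + ∫ s in (0 : ℝ)..x, d s, contDiff_const.add
    (by simpa using contDiff_integral (n := 0) (by simpa using hd) 0), fun x hx => ?_⟩
  have hderiv : ∀ y ∈ Ioo 0 x, HasDerivAt f (d y) y := fun y hy => by
    have hy' : y ∈ Ioo (0 : ℝ) 1 := ⟨hy.1, hy.2.trans_le hx.2⟩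
    rw [show d y = derivWithin f (Icc 0 1) y from IccExtend_of_mem _ _ (Ioo_subset_Icc_self hy')]
    exact (hf.differentiableOn one_ne_zero y (Ioo_subset_Icc_self hy')).hasDerivWithinAt.hasDerivAt
      (Icc_mem_nhds hy'.1 hy'.2)
  simp [integral_eq_sub_of_hasDerivAt_of_le hx.1 (hf.continuousOn.mono (Icc_subset_Icc_right hx.2))
    hderiv (hd.intervalIntegrable _ _)]

/-- A map of `[0, ∞)` into `[0, 1]` tangent to the identity at `0`, along which functions on the
unit interval are reflected at an end point. -/
noncomputable def foldMap (s : ℝ) : ℝ := s / (1 + s ^ 2)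

@[simp]
lemma foldMap_zero : foldMap 0 = 0 := by simp [foldMap]

lemma foldMap_mem_Icc {s : ℝ} (hs : 0 ≤ s) : foldMap s ∈ Icc (0 : ℝ) 1 := by
  refine ⟨by unfold foldMap; positivity, ?_⟩
  rw [foldMap, div_le_one (by positivity)]
  nlinarith [sq_nonneg (s - 1)]

lemma contDiff_foldMap : ContDiff ℝ 1 foldMap :=
  contDiff_id.div (by fun_prop) fun s => by positivity

lemma hasDerivAt_foldMap_zero : HasDerivAt foldMap 1 0 := by
  have := (hasDerivAt_id (0 : ℝ)).div (((hasDerivAt_id (0 : ℝ)).pow 2).const_add 1) (by norm_num)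
  exact (this.congr_deriv (by simp)).congr_of_eventuallyEq (.of_forall fun _ => rfl)

/-- The extension of a function on the unit interval to the line by odd reflection of its graph
through its end points. It is linear, and preserves boundedness, continuity and continuous
differentiability. -/
noncomputable def reflectExtend (f : ℝ → E) (x : ℝ) : E :=
  f (max 0 (min 1 x)) + (f 0 - f (foldMap (max 0 (-x)))) + (f 1 - f (1 - foldMap (max 0 (x - 1))))

lemma reflectExtend_args_mem_Icc (x : ℝ) : max 0 (min 1 x) ∈ Icc (0 : ℝ) 1 ∧
    foldMap (max 0 (-x)) ∈ Icc (0 : ℝ) 1 ∧ 1 - foldMap (max 0 (x - 1)) ∈ Icc (0 : ℝ) 1 :=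
  ⟨⟨le_max_left _ _, max_le zero_le_one (min_le_left _ _)⟩, foldMap_mem_Icc (le_max_left _ _),
    Icc.mem_iff_one_sub_mem.1 (foldMap_mem_Icc (le_max_left _ _))⟩

lemma reflectExtend_of_mem (f : ℝ → E) {x : ℝ} (hx : x ∈ Icc (0 : ℝ) 1) :
    reflectExtend f x = f x := by
  simp [reflectExtend, min_eq_right hx.2, max_eq_right hx.1,
    max_eq_left (neg_nonpos.2 hx.1), max_eq_left (sub_nonpos.2 hx.2)]

lemma continuous_reflectExtend {f : ℝ → E} (hf : ContinuousOn f (Icc 0 1)) :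
    Continuous (reflectExtend f) := by
  have hφ := contDiff_foldMap.continuous
  have hmem := reflectExtend_args_mem_Icc
  exact ((hf.comp_continuous (by fun_prop) fun x => (hmem x).1).add
    (continuous_const.sub (hf.comp_continuous (by fun_prop) fun x => (hmem x).2.1))).add
    (continuous_const.sub (hf.comp_continuous (by fun_prop) fun x => (hmem x).2.2))

lemma norm_reflectExtend_le {f : ℝ → E} {C : ℝ} (hf : ∀ x ∈ Icc (0 : ℝ) 1, ‖f x‖ ≤ C) (x : ℝ) :
    ‖reflectExtend f x‖ ≤ 5 * C := by
  obtain ⟨h₁, h₂, h₃⟩ := reflectExtend_args_mem_Icc x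
  have h01 := norm_sub_le (f 0) (f (foldMap (max 0 (-x))))
  have h11 := norm_sub_le (f 1) (f (1 - foldMap (max 0 (x - 1))))
  refine norm_add₃_le.trans ?_
  linarith [hf _ h₁, hf _ h₂, hf _ h₃, hf 0 (by simp), hf 1 (by simp)]

lemma reflectExtend_congr {f g : ℝ → E} (h : EqOn f g (Icc 0 1)) :
    reflectExtend f = reflectExtend g := by
  funext x
  obtain ⟨h₁, h₂, h₃⟩ := reflectExtend_args_mem_Icc x
  simp only [reflectExtend, h h₁, h h₂, h h₃, h (show (0 : ℝ) ∈ Icc 0 1 by simp),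
    h (show (1 : ℝ) ∈ Icc 0 1 by simp)]

lemma hasSum_reflectExtend {ι : Type*} {F : ι → ℝ → E} {f : ℝ → E}
    (h : ∀ x ∈ Icc (0 : ℝ) 1, HasSum (fun n => F n x) (f x)) (x : ℝ) :
    HasSum (fun n => reflectExtend (F n) x) (reflectExtend f x) := by
  obtain ⟨h₁, h₂, h₃⟩ := reflectExtend_args_mem_Icc x
  exact ((h _ h₁).add ((h 0 (by simp)).sub (h _ h₂))).add ((h 1 (by simp)).sub (h _ h₃))

lemma contDiff_one_reflectExtend [NormedSpace ℝ E] [CompleteSpace E] {f : ℝ → E}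
    (hf : ContDiffOn ℝ 1 f (Icc 0 1)) : ContDiff ℝ 1 (reflectExtend f) := by
  obtain ⟨g, hg, hgf⟩ := exists_contDiff_one_eqOn_Icc hf
  have hg' (x : ℝ) := (hg.differentiable one_ne_zero x).hasDerivAt
  have hφ := contDiff_foldMap
  have hφ0 := hasDerivAt_foldMap_zero
  set A : ℝ → E := fun s => (g 0 - g (-s)) + (g 0 - g (foldMap s)) with hA
  set B : ℝ → E := fun s => (g 1 - g (1 + s)) + (g 1 - g (1 - foldMap s)) with hB
  have hA' : HasDerivAt A 0 0 := by
    have h₁ := (hg' (-0)).scomp 0 (hasDerivAt_neg 0)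
    have h₂ := (hg' (foldMap 0)).scomp 0 hφ0
    refine ((h₁.const_sub (g 0)).add (h₂.const_sub (g 0))).congr_deriv ?_
    simp
  have hB' : HasDerivAt B 0 0 := by
    have h₁ := (hg' (1 + 0)).scomp 0 ((hasDerivAt_id (0 : ℝ)).const_add 1)
    have h₂ := (hg' (1 - foldMap 0)).scomp 0 (hφ0.const_sub 1)
    refine ((h₁.const_sub (g 1)).add (h₂.const_sub (g 1))).congr_deriv ?_
    simp
  have hsplit : reflectExtend g = fun x => g x + A (max 0 (-x)) + B (max 0 (x - 1)) := by
    funext x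
    have hclamp : g (max 0 (min 1 x))
        = g x + (g 0 - g (-max 0 (-x))) + (g 1 - g (1 + max 0 (x - 1))) := by
      rcases le_total x 0 with h0 | h0
      · simp [min_eq_right (h0.trans zero_le_one), max_eq_left h0, max_eq_right (neg_nonneg.2 h0),
          max_eq_left (show x - 1 ≤ 0 by linarith)]
      rcases le_total x 1 with h1 | h1
      · simp [min_eq_right h1, max_eq_right h0, max_eq_left (neg_nonpos.2 h0),
          max_eq_left (sub_nonpos.2 h1)]
      · simp [min_eq_left h1, max_eq_left (neg_nonpos.2 h0), max_eq_right (sub_nonneg.2 h1)]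
    simp only [reflectExtend, hclamp, hA, hB]
    abel
  have hAmax := contDiff_one_comp_max_zero (A := A) (by fun_prop) (by simp [hA]) hA'.deriv
  have hBmax := contDiff_one_comp_max_zero (A := B) (by fun_prop) (by simp [hB]) hB'.deriv
  rw [← reflectExtend_congr hgf, hsplit]
  exact (hg.add (hAmax.comp contDiff_neg)).add (hBmax.comp (contDiff_id.sub contDiff_const))

end extension

lemma SpaceC1TimeAnalytic.exists_isHolomorphicFamily {f : ℝ → ℝ → ℝ}
    (hf : SpaceC1TimeAnalytic f) : ∃ (g : ℝ → ℂ → ℂ) (C : ℝ),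
      IsHolomorphicFamily (ball 0 1) g
      ∧ (∀ x, ∀ z ∈ ball (0 : ℂ) 1, ‖g x z‖ ≤ C / (1 - ‖z‖))
      ∧ (∀ t ∈ Ico (0 : ℝ) 1, ContDiff ℝ 1 fun x => g x t)
      ∧ ∀ x ∈ Icc (0 : ℝ) 1, ∀ t ∈ Ico (0 : ℝ) 1, g x t = f x t := by
  obtain ⟨hf1, a, C, hC, hfa⟩ := hf
  set α : ℕ → ℝ → ℂ := fun n x => a n x
  have hα : ∀ n, ∀ x ∈ Icc (0 : ℝ) 1, ‖α n x‖ ≤ C := fun n x hx => by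
    simpa [α] using hC n x hx
  have hball : ∀ t ∈ Ico (0 : ℝ) 1, (t : ℂ) ∈ ball (0 : ℂ) 1 := fun t ht => by
    simpa [abs_of_nonneg ht.1] using ht.2
  have htsum : ∀ t ∈ Ico (0 : ℝ) 1, ∀ x ∈ Icc (0 : ℝ) 1,
      HasSum (fun n => α n x * (t : ℂ) ^ n) (f x t) := fun t ht x hx => by
    convert (summable_mul_pow_of_norm_le (fun n => hα n x hx) (hball t ht)).hasSum
    simp [hfa x hx t ht, α, Complex.ofReal_tsum]
  have hf1' : ∀ t ∈ Ico (0 : ℝ) 1, ContDiffOn ℝ 1 (fun x => (f x t : ℂ)) (Icc 0 1) :=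
    fun t ht => Complex.ofRealCLM.contDiff.comp_contDiffOn (hf1 t ht)
  have hcont (n : ℕ) : ContinuousOn (α n) (Icc 0 1) := continuousOn_coeff n hα fun t ht =>
    (hf1' t ⟨ht.1.le, ht.2⟩).continuousOn.congr fun x hx =>
      (htsum t ⟨ht.1.le, ht.2⟩ x hx).tsum_eq
  have hext : ∀ t ∈ Ico (0 : ℝ) 1, ∀ x,
      ∑' n, reflectExtend (α n) x * (t : ℂ) ^ n = reflectExtend (fun x => (f x t : ℂ)) x :=
    fun t ht x => by
      have hmul (n : ℕ) : reflectExtend (α n) x * (t : ℂ) ^ n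
          = reflectExtend (fun x => α n x * (t : ℂ) ^ n) x := by simp only [reflectExtend]; ring
      simp only [hmul, (hasSum_reflectExtend (htsum t ht) x).tsum_eq]
  refine ⟨fun x z => ∑' n, reflectExtend (α n) x * z ^ n, 5 * C,
    isHolomorphicFamily_tsum_mul_pow (fun n => continuous_reflectExtend (hcont n))
      fun n => norm_reflectExtend_le (hα n),
    fun x z hz => norm_tsum_mul_pow_le (fun n => norm_reflectExtend_le (hα n) x) hz,
    fun t ht => ?_, fun x hx t ht => ?_⟩
  · simpa only [hext t ht] using contDiff_one_reflectExtend (hf1' t ht)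
  · exact (hext t ht x).trans (reflectExtend_of_mem _ hx)

/-! ### Uniqueness -/

section baire

variable {ι : Type*} {w : ι → ℝ}

lemma exists_isOpen_forall_le_mul_of_continuous {X : Type*} [TopologicalSpace X] [BaireSpace X]
    [Nonempty X] {g : ι → X → ℝ} (hw : ∀ i, 0 ≤ w i) (hg : ∀ i, Continuous (g i))
    (hb : ∀ x, ∃ K, ∀ i, g i x ≤ K * w i) :
    ∃ U : Set X, IsOpen U ∧ U.Nonempty ∧ ∃ K, ∀ x ∈ U, ∀ i, g i x ≤ K * w i := by
  have hclosed (n : ℕ) : IsClosed {x | ∀ i, g i x ≤ n * w i} := by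
    simp only [Set.ofPred_forall]
    exact isClosed_iInter fun i => isClosed_le (hg i) continuous_const
  have hcover : ⋃ n : ℕ, {x | ∀ i, g i x ≤ n * w i} = univ := eq_univ_of_forall fun x => by
    obtain ⟨K, hK⟩ := hb x
    obtain ⟨n, hn⟩ := exists_nat_ge K
    exact mem_iUnion.2 ⟨n, fun i => (hK i).trans (mul_le_mul_of_nonneg_right hn (hw i))⟩
  obtain ⟨n, hn⟩ := nonempty_interior_of_iUnion_of_closed hclosed hcover
  exact ⟨_, isOpen_interior, hn, n, fun x hx => interior_subset hx⟩

lemma exists_Icc_subset_forall_le_mul_of_continuousOn {g : ι → ℝ → ℝ} {a b : ℝ} (hab : a < b)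
    (hw : ∀ i, 0 ≤ w i) (hg : ∀ i, ContinuousOn (g i) (Ioo a b))
    (hb : ∀ t ∈ Ioo a b, ∃ K, ∀ i, g i t ≤ K * w i) :
    ∃ α β K, α < β ∧ Icc α β ⊆ Ioo a b ∧ ∀ t ∈ Icc α β, ∀ i, g i t ≤ K * w i := by
  have : BaireSpace (Ioo a b) := isOpen_Ioo.baireSpace
  have : Nonempty (Ioo a b) := (nonempty_Ioo.2 hab).to_subtype
  obtain ⟨U, hU, ⟨t, ht⟩, K, hK⟩ := exists_isOpen_forall_le_mul_of_continuous hw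
    (fun i => (hg i).domRestrict) fun t => hb t t.2
  obtain ⟨ε, hε, hball⟩ := Metric.nhds_basis_closedBall.mem_iff.1
    ((isOpen_Ioo.isOpenMap_subtype_val U hU).mem_nhds (mem_image_of_mem _ ht))
  rw [Real.closedBall_eq_Icc] at hball
  refine ⟨t - ε, t + ε, K, by linarith, fun s hs => ?_, fun s hs i => ?_⟩ <;>
    obtain ⟨s', hs', rfl⟩ := hball hs
  exacts [s'.2, hK s' hs' i]

end baire

/-- The second difference of a function on the plane over the corners of the rectangle
`[a₁, b₁] × [a₂, b₂]`. -/
def mixedDiff {E : Type*} [AddGroup E] (g : ℝ × ℝ → E) (a₁ b₁ a₂ b₂ : ℝ) : E :=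
  g (b₁, b₂) - g (a₁, b₂) - (g (b₁, a₂) - g (a₁, a₂))

section mixedDiff

variable {E : Type*} [NormedAddCommGroup E] [NormedSpace ℝ E] {g : ℝ × ℝ → E} {U : Set (ℝ × ℝ)}
  {a₁ b₁ a₂ b₂ K : ℝ}

lemma mixedDiff_congr {E : Type*} [AddGroup E] {f g : ℝ × ℝ → E} {a₁ b₁ a₂ b₂ : ℝ}
    (h₁ : a₁ ≤ b₁) (h₂ : a₂ ≤ b₂) (h : EqOn f g (Icc a₁ b₁ ×ˢ Icc a₂ b₂)) :
    mixedDiff f a₁ b₁ a₂ b₂ = mixedDiff g a₁ b₁ a₂ b₂ := by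
  rw [mixedDiff, h ⟨right_mem_Icc.2 h₁, right_mem_Icc.2 h₂⟩,
    h ⟨left_mem_Icc.2 h₁, right_mem_Icc.2 h₂⟩, h ⟨right_mem_Icc.2 h₁, left_mem_Icc.2 h₂⟩,
    h ⟨left_mem_Icc.2 h₁, left_mem_Icc.2 h₂⟩, mixedDiff]

lemma continuousOn_mixedDiff {E : Type*} [NormedAddCommGroup E] {f : ℝ × ℝ → ℝ → E} {J : Set ℝ}
    {a₁ b₁ a₂ b₂ : ℝ} (h₁ : a₁ ≤ b₁) (h₂ : a₂ ≤ b₂)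
    (hf : ∀ p ∈ Icc a₁ b₁ ×ˢ Icc a₂ b₂, ContinuousOn (f p) J) :
    ContinuousOn (fun t => mixedDiff (fun p => f p t) a₁ b₁ a₂ b₂) J :=
  ((hf _ ⟨right_mem_Icc.2 h₁, right_mem_Icc.2 h₂⟩).sub
    (hf _ ⟨left_mem_Icc.2 h₁, right_mem_Icc.2 h₂⟩)).sub
      ((hf _ ⟨right_mem_Icc.2 h₁, left_mem_Icc.2 h₂⟩).sub
        (hf _ ⟨left_mem_Icc.2 h₁, left_mem_Icc.2 h₂⟩))

lemma mixedDiff_intervalIntegral {E : Type*} [NormedAddCommGroup E] [NormedSpace ℝ E]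
    {f : ℝ × ℝ → ℝ → E} {α β a₁ b₁ a₂ b₂ : ℝ} (h₁ : a₁ ≤ b₁) (h₂ : a₂ ≤ b₂)
    (hf : ∀ p ∈ Icc a₁ b₁ ×ˢ Icc a₂ b₂, IntervalIntegrable (f p) MeasureTheory.volume α β) :
    mixedDiff (fun p => ∫ t in α..β, f p t) a₁ b₁ a₂ b₂
      = ∫ t in α..β, mixedDiff (fun p => f p t) a₁ b₁ a₂ b₂ := by
  have hrr := hf (b₁, b₂) ⟨right_mem_Icc.2 h₁, right_mem_Icc.2 h₂⟩
  have hlr := hf (a₁, b₂) ⟨left_mem_Icc.2 h₁, right_mem_Icc.2 h₂⟩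
  have hrl := hf (b₁, a₂) ⟨right_mem_Icc.2 h₁, left_mem_Icc.2 h₂⟩
  have hll := hf (a₁, a₂) ⟨left_mem_Icc.2 h₁, left_mem_Icc.2 h₂⟩
  simp only [mixedDiff]
  rw [integral_sub (hrr.sub hlr) (hrl.sub hll), integral_sub hrr hlr, integral_sub hrl hll]

lemma continuousOn_mixedDeriv (hU : IsOpen U) (hg : ContDiffOn ℝ 2 g U) :
    ContinuousOn (mixedDeriv g) U :=
  (((hg.fderiv_of_isOpen (m := 1) hU (by norm_num)).continuousOn_fderiv_of_isOpen hU
    le_rfl).clm_apply continuousOn_const).clm_apply continuousOn_const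

lemma hasDerivAt_fst_of_contDiffAt {x y : ℝ} (hg : ContDiffAt ℝ 2 g (x, y)) :
    HasDerivAt (fun x => g (x, y)) (fderiv ℝ g (x, y) (1, 0)) x :=
  (hg.differentiableAt two_ne_zero).hasFDerivAt.comp_hasDerivAt x
    ((hasDerivAt_id x).prodMk (hasDerivAt_const x y))

lemma hasDerivAt_fderiv_fst_of_contDiffAt {x y : ℝ} (hg : ContDiffAt ℝ 2 g (x, y)) :
    HasDerivAt (fun y => fderiv ℝ g (x, y) (1, 0)) (mixedDeriv g (x, y)) y :=
  hasDerivAt_fderiv_apply_comp hg ((hasDerivAt_const y x).prodMk (hasDerivAt_id y)) rfl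

lemma mixedDiff_eq_integral_mixedDeriv [CompleteSpace E] (hU : IsOpen U) (hg : ContDiffOn ℝ 2 g U)
    (hR : uIcc a₁ b₁ ×ˢ uIcc a₂ b₂ ⊆ U) :
    mixedDiff g a₁ b₁ a₂ b₂ = ∫ x in a₁..b₁, ∫ y in a₂..b₂, mixedDeriv g (x, y) := by
  have hat {x y : ℝ} (hx : x ∈ uIcc a₁ b₁) (hy : y ∈ uIcc a₂ b₂) : ContDiffAt ℝ 2 g (x, y) :=
    hg.contDiffAt (hU.mem_nhds (hR ⟨hx, hy⟩))
  have hinner : ∀ x ∈ uIcc a₁ b₁, ∫ y in a₂..b₂, mixedDeriv g (x, y)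
      = fderiv ℝ g (x, b₂) (1, 0) - fderiv ℝ g (x, a₂) (1, 0) := fun x hx =>
    integral_eq_sub_of_hasDerivAt (fun y hy => hasDerivAt_fderiv_fst_of_contDiffAt (hat hx hy))
      (ContinuousOn.intervalIntegrable ((continuousOn_mixedDeriv hU hg).comp (by fun_prop)
        fun y hy => hR ⟨hx, hy⟩))
  have hcont : ∀ y ∈ uIcc a₂ b₂, ContinuousOn (fun x => fderiv ℝ g (x, y) (1, 0)) (uIcc a₁ b₁) :=
    fun y hy => ((hg.continuousOn_fderiv_of_isOpen hU one_le_two).clm_apply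
      continuousOn_const).comp (by fun_prop) fun x hx => hR ⟨hx, hy⟩
  rw [integral_congr hinner, integral_eq_sub_of_hasDerivAt (fun x hx =>
    (hasDerivAt_fst_of_contDiffAt (hat hx right_mem_uIcc)).sub
      (hasDerivAt_fst_of_contDiffAt (hat hx left_mem_uIcc)))
    ((hcont b₂ right_mem_uIcc).sub (hcont a₂ left_mem_uIcc)).intervalIntegrable, mixedDiff]
  simp only [Pi.sub_apply]
  abel

lemma setIntegral_Icc_prod_Icc (h₁ : a₁ ≤ b₁) (h₂ : a₂ ≤ b₂)
    (hg : ContinuousOn g (Icc a₁ b₁ ×ˢ Icc a₂ b₂)) :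
    ∫ q in Icc a₁ b₁ ×ˢ Icc a₂ b₂, g q = ∫ x in a₁..b₁, ∫ y in a₂..b₂, g (x, y) := by
  have hint := hg.integrableOn_compact (isCompact_Icc.prod isCompact_Icc)
    (μ := MeasureTheory.volume.prod MeasureTheory.volume)
  simp only [integral_of_le h₁, integral_of_le h₂, ← MeasureTheory.integral_Icc_eq_integral_Ioc]
  exact MeasureTheory.setIntegral_prod g hint

lemma mixedDiff_eq_setIntegral_mixedDeriv [CompleteSpace E] (hU : IsOpen U)
    (hg : ContDiffOn ℝ 2 g U) (h₁ : a₁ ≤ b₁) (h₂ : a₂ ≤ b₂) (hR : Icc a₁ b₁ ×ˢ Icc a₂ b₂ ⊆ U) :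
    mixedDiff g a₁ b₁ a₂ b₂ = ∫ q in Icc a₁ b₁ ×ˢ Icc a₂ b₂, mixedDeriv g q := by
  rw [setIntegral_Icc_prod_Icc h₁ h₂ ((continuousOn_mixedDeriv hU hg).mono hR)]
  exact mixedDiff_eq_integral_mixedDeriv hU hg (by rwa [uIcc_of_le h₁, uIcc_of_le h₂])

lemma norm_mixedDiff_le [CompleteSpace E] (hU : IsOpen U) (hg : ContDiffOn ℝ 2 g U)
    (hK : ∀ p ∈ U, ‖mixedDeriv g p‖ ≤ K) (hR : uIcc a₁ b₁ ×ˢ uIcc a₂ b₂ ⊆ U) :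
    ‖mixedDiff g a₁ b₁ a₂ b₂‖ ≤ K * (|b₂ - a₂| * |b₁ - a₁|) := by
  rw [mixedDiff_eq_integral_mixedDeriv hU hg hR, ← mul_assoc]
  exact norm_integral_le_of_norm_le_const fun x hx => norm_integral_le_of_norm_le_const
    fun y hy => hK _ (hR ⟨uIoc_subset_uIcc hx, uIoc_subset_uIcc hy⟩)

lemma norm_mixedDeriv_le (hU : IsOpen U) (hg : ContDiffOn ℝ 2 g U) (hK0 : 0 ≤ K)
    (hK : ∀ a₁ b₁ a₂ b₂, uIcc a₁ b₁ ×ˢ uIcc a₂ b₂ ⊆ U →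
      ‖mixedDiff g a₁ b₁ a₂ b₂‖ ≤ K * (|b₂ - a₂| * |b₁ - a₁|)) {p : ℝ × ℝ} (hp : p ∈ U) :
    ‖mixedDeriv g p‖ ≤ K := by
  obtain ⟨x, y⟩ := p
  obtain ⟨ε, hε, hball⟩ := Metric.isOpen_iff.1 hU (x, y) hp
  rw [← ball_prod_same] at hball
  have hat {x' y' : ℝ} (hx : x' ∈ ball x ε) (hy : y' ∈ ball y ε) : ContDiffAt ℝ 2 g (x', y') :=
    hg.contDiffAt (hU.mem_nhds (hball ⟨hx, hy⟩))
  have hx := Metric.mem_ball_self (x := x) hε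
  have hy := Metric.mem_ball_self (x := y) hε
  have hrect {x' y' : ℝ} (hx' : x' ∈ ball x ε) (hy' : y' ∈ ball y ε) :
      uIcc x x' ×ˢ uIcc y y' ⊆ U := by
    refine (Set.prod_mono ?_ ?_).trans hball <;> rw [← segment_eq_uIcc]
    exacts [(convex_ball x ε).segment_subset hx hx', (convex_ball y ε).segment_subset hy hy']
  refine (hasDerivAt_fderiv_fst_of_contDiffAt (hat hx hy)).le_of_lip' hK0 ?_
  filter_upwards [Metric.isOpen_ball.mem_nhds hy] with y' hy'
  refine ((hasDerivAt_fst_of_contDiffAt (hat hx hy')).sub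
    (hasDerivAt_fst_of_contDiffAt (hat hx hy))).le_of_lip' (by positivity) ?_
  filter_upwards [Metric.isOpen_ball.mem_nhds hx] with x' hx'
  simp only [Pi.sub_apply, Real.norm_eq_abs]
  refine (congrArg norm ?_).trans_le ((hK x x' y y' (hrect hx' hy')).trans_eq (mul_assoc ..).symm)
  rw [mixedDiff]
  abel

lemma exists_norm_mixedDeriv_le {T : Set (ℝ × ℝ)} (hT : IsCompact T) (hT' : UniqueDiffOn ℝ T)
    (hg : ContDiffOn ℝ 2 g T) : ∃ K, ∀ p ∈ interior T, ‖mixedDeriv g p‖ ≤ K := by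
  have hcont := (hg.fderivWithin hT' (m := 1) (by norm_num)).continuousOn_fderivWithin hT' le_rfl
  obtain ⟨K, hK⟩ := hT.exists_bound_of_continuousOn
    ((hcont.clm_apply (continuousOn_const (c := (0, 1)))).clm_apply
      (continuousOn_const (c := (1, 0))))
  refine ⟨K, fun p hp => ?_⟩
  have hev : fderivWithin ℝ g T =ᶠ[𝓝 p] fderiv ℝ g := by
    filter_upwards [isOpen_interior.mem_nhds hp] with q hq
    exact fderivWithin_of_mem_nhds (mem_interior_iff_mem_nhds.1 hq)
  have := hK p (interior_subset hp)
  rwa [fderivWithin_of_mem_nhds (mem_interior_iff_mem_nhds.1 hp), hev.fderiv_eq] at this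

end mixedDiff

lemma mixedDiff_primFst_primSnd {f : ℝ × ℝ → ℂ} (hf : Continuous f) {a₁ b₁ a₂ b₂ : ℝ}
    (h₁ : a₁ ≤ b₁) (h₂ : a₂ ≤ b₂) : mixedDiff (primFst (primSnd f)) a₁ b₁ a₂ b₂
      = ∫ q in Icc a₁ b₁ ×ˢ Icc a₂ b₂, f q := by
  have hsnd (x : ℝ) : ∫ y in a₂..b₂, f (x, y) = primSnd f (x, b₂) - primSnd f (x, a₂) :=
    (integral_interval_sub_left (Continuous.intervalIntegrable (by fun_prop) _ _)
      (Continuous.intervalIntegrable (by fun_prop) _ _)).symm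
  have hfst (y : ℝ) : ∫ x in a₁..b₁, primSnd f (x, y)
      = primFst (primSnd f) (b₁, y) - primFst (primSnd f) (a₁, y) :=
    (integral_interval_sub_left
      (((continuous_primSnd hf).comp (Continuous.prodMk_left y)).intervalIntegrable _ _)
      (((continuous_primSnd hf).comp (Continuous.prodMk_left y)).intervalIntegrable _ _)).symm
  rw [setIntegral_Icc_prod_Icc h₁ h₂ hf.continuousOn]
  simp only [hsnd]
  rw [integral_sub, hfst, hfst, mixedDiff]
  all_goals exact ((continuous_primSnd hf).comp (Continuous.prodMk_left _)).intervalIntegrable _ _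

section setIntegral

variable {X Y E : Type*} [TopologicalSpace X] [TopologicalSpace Y] [SecondCountableTopology Y]
  [MeasurableSpace Y] [OpensMeasurableSpace Y] {μ : MeasureTheory.Measure Y}
  [MeasureTheory.IsFiniteMeasureOnCompacts μ] [NormedAddCommGroup E] [NormedSpace ℝ E] {K : Set Y}

lemma continuousOn_setIntegral [FirstCountableTopology X] {f : X → Y → E} {s : Set X}
    (hK : IsCompact K) (hKm : MeasurableSet K) (hf : ContinuousOn (uncurry f) (s ×ˢ K)) :
    ContinuousOn (fun x => ∫ y in K, f x y ∂μ) s := by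
  intro x hx
  have hsec : ∀ x ∈ s, ContinuousOn (f x) K := fun x hx =>
    hf.comp (Continuous.prodMk_right x).continuousOn fun y hy => ⟨hx, hy⟩
  obtain ⟨C, hC⟩ := hK.exists_bound_of_continuousOn (hsec x hx)
  have hnear : ∀ᶠ x' in 𝓝[s] x, ∀ y ∈ K, ‖f x' y‖ ≤ C + 1 := by
    obtain ⟨V, hV, hVf⟩ := hK.mem_uniformity_of_prod hf hx (Metric.dist_mem_uniformity one_pos)
    filter_upwards [hV] with x' hx' y hy
    have : dist (f x' y) (f x y) < 1 := hVf x' hx' y hy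
    have := norm_le_norm_add_norm_sub' (f x' y) (f x y)
    rw [dist_eq_norm] at *
    linarith [hC y hy]
  have : MeasureTheory.IsFiniteMeasure (μ.restrict K) := ⟨by simpa using hK.measure_lt_top⟩
  refine MeasureTheory.continuousWithinAt_of_dominated (bound := fun _ => C + 1)
    (eventually_mem_nhdsWithin.mono fun x hx => (hsec x hx).aestronglyMeasurable hKm)
    (hnear.mono fun x' hx' => (MeasureTheory.ae_restrict_iff' hKm).2 (.of_forall hx'))
    (MeasureTheory.integrable_const _) ((MeasureTheory.ae_restrict_iff' hKm).2 (.of_forall ?_))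
  exact fun y hy => (hf.comp (Continuous.prodMk_left y).continuousOn fun x hx => ⟨hx, hy⟩) x hx

lemma continuous_intervalIntegral_of_continuousOn [FirstCountableTopology X] {f : X → ℝ → E}
    {α β : ℝ} (hαβ : α ≤ β) (hf : ContinuousOn (uncurry f) (univ ×ˢ Icc α β)) :
    Continuous fun x => ∫ t in α..β, f x t := by
  simp_rw [integral_of_le hαβ, ← MeasureTheory.integral_Icc_eq_integral_Ioc]
  exact continuousOn_univ.1 (continuousOn_setIntegral isCompact_Icc measurableSet_Icc hf)

lemma intervalIntegral_setIntegral_swap [MeasureTheory.SFinite μ] {f : ℝ → Y → E} {α β : ℝ}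
    (hαβ : α ≤ β) (hK : IsCompact K) (hKm : MeasurableSet K)
    (hf : ContinuousOn (uncurry f) (Icc α β ×ˢ K)) :
    ∫ t in α..β, ∫ y in K, f t y ∂μ = ∫ y in K, (∫ t in α..β, f t y) ∂μ := by
  refine MeasureTheory.intervalIntegral_integral_swap ?_
  rw [uIoc_of_le hαβ, MeasureTheory.Measure.prod_restrict]
  exact (hf.integrableOn_compact' (isCompact_Icc.prod hK) (measurableSet_Icc.prod hKm)).mono_set
    (prod_mono_left Ioc_subset_Icc_self)

lemma hasDerivAt_setIntegral_of_lipschitzOnWith {f : Y → ℝ → E} {f' : Y → E} {J : Set ℝ}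
    {L : NNReal} {t : ℝ} (hK : IsCompact K) (hKm : MeasurableSet K)
    (hf : ∀ s ∈ J, ContinuousOn (fun y => f y s) K) (hL : ∀ y ∈ K, LipschitzOnWith L (f y) J)
    (hf' : ContinuousOn f' K) (h : ∀ y ∈ K, HasDerivAt (f y) (f' y) t) (hJ : J ∈ 𝓝 t) :
    HasDerivAt (fun s => ∫ y in K, f y s ∂μ) (∫ y in K, f' y ∂μ) t := by
  have hae {P : Y → Prop} (hP : ∀ y ∈ K, P y) : ∀ᵐ y ∂μ.restrict K, P y :=
    (MeasureTheory.ae_restrict_iff' hKm).2 (.of_forall hP)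
  have : MeasureTheory.IsFiniteMeasure (μ.restrict K) := ⟨by simpa using hK.measure_lt_top⟩
  refine (hasDerivAt_integral_of_dominated_loc_of_lip (bound := fun _ => (L : ℝ)) hJ
    (eventually_of_mem hJ fun s hs => (hf s hs).aestronglyMeasurable hKm)
    ((hf t (mem_of_mem_nhds hJ)).integrableOn_compact' hK hKm)
    (hf'.aestronglyMeasurable hKm) (hae fun y hy => ?_)
    (MeasureTheory.integrable_const _) (hae h)).2
  simpa using hL y hy

end setIntegral

/-- The triangle `Ω` in the characteristic coordinates `(ξ, η) = (x + y, x - y)`. -/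
def charTriangle : Set (ℝ × ℝ) := {p | 0 ≤ p.2 ∧ p.2 ≤ p.1 ∧ p.1 + p.2 ≤ 2}

lemma convex_charTriangle : Convex ℝ charTriangle := by
  rintro p ⟨hp₁, hp₂, hp₃⟩ q ⟨hq₁, hq₂, hq₃⟩ a b ha hb hab
  simp only [charTriangle, mem_ofPred_eq, Prod.fst_add, Prod.snd_add, Prod.smul_fst, Prod.smul_snd,
    smul_eq_mul]
  exact ⟨by positivity, by gcongr, by nlinarith⟩

lemma isCompact_charTriangle : IsCompact charTriangle := by
  refine (isCompact_Icc (a := ((0, 0) : ℝ × ℝ)) (b := (2, 2))).of_isClosed_subset ?_ ?_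
  · exact (isClosed_le continuous_const continuous_snd).inter
      ((isClosed_le continuous_snd continuous_fst).inter
        (isClosed_le (continuous_fst.add continuous_snd) continuous_const))
  · rintro p ⟨h₁, h₂, h₃⟩
    exact ⟨⟨by simp; linarith, h₁⟩, ⟨by simp; linarith, by simp; linarith⟩⟩

lemma mem_interior_charTriangle {p : ℝ × ℝ} (h₁ : 0 < p.2) (h₂ : p.2 < p.1) (h₃ : p.1 + p.2 < 2) :
    p ∈ interior charTriangle :=
  mem_interior.2 ⟨{p | 0 < p.2 ∧ p.2 < p.1 ∧ p.1 + p.2 < 2},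
    fun _ hq => ⟨hq.1.le, hq.2.1.le, hq.2.2.le⟩,
    (isOpen_lt continuous_const continuous_snd).inter
      ((isOpen_lt continuous_snd continuous_fst).inter
        (isOpen_lt (continuous_fst.add continuous_snd) continuous_const)), h₁, h₂, h₃⟩

lemma nonempty_interior_charTriangle : (interior charTriangle).Nonempty :=
  ⟨(1, 1 / 2), mem_interior_charTriangle (by norm_num) (by norm_num) (by norm_num)⟩

lemma closure_interior_charTriangle : closure (interior charTriangle) = charTriangle := by
  rw [convex_charTriangle.closure_interior_eq_closure_of_nonempty_interior
    nonempty_interior_charTriangle, isCompact_charTriangle.isClosed.closure_eq]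

lemma goursat_zero_eq_mixedDiff {F : ℝ × ℝ → ℂ} (hF : Continuous F) (p : ℝ × ℝ) :
    goursat 0 F p = mixedDiff (primFst (primSnd F)) p.2 p.1 0 p.2 := by
  have hzero (x : ℝ) : primFst (primSnd F) (x, 0) = 0 := by simp [primFst, primSnd]
  simp [goursat_eq_primitives continuous_zero hF, mixedDiff, hzero]

lemma eq_goursat_of_mixedDiff_eq {V F : ℝ × ℝ → ℂ} (hV : Continuous V) (hF : Continuous F)
    (hzero : ∀ x ∈ Icc (0 : ℝ) 2, V (x, 0) = 0) (hself : ∀ x ∈ Icc (0 : ℝ) 1, V (x, x) = 0)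
    (h : ∀ a₁ b₁ a₂ b₂, a₁ ≤ b₁ → a₂ ≤ b₂ → Icc a₁ b₁ ×ˢ Icc a₂ b₂ ⊆ interior charTriangle →
      mixedDiff V a₁ b₁ a₂ b₂ = ∫ q in Icc a₁ b₁ ×ˢ Icc a₂ b₂, F q)
    {p : ℝ × ℝ} (hp : p ∈ charTriangle) : V p = goursat 0 F p := by
  obtain ⟨ξ, η⟩ := p
  obtain ⟨hη₀, hηξ, hξη⟩ : 0 ≤ η ∧ η ≤ ξ ∧ ξ + η ≤ 2 := hp
  have hVdiff : V (ξ, η) = mixedDiff V η ξ 0 η := by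
    rw [mixedDiff, hzero ξ ⟨by linarith, by linarith⟩, hzero η ⟨hη₀, by linarith⟩,
      hself η ⟨hη₀, by linarith⟩, sub_zero, sub_zero, sub_zero]
  rw [hVdiff, goursat_zero_eq_mixedDiff hF]
  rcases hη₀.eq_or_lt with rfl | hη₀
  · simp [mixedDiff]
  rcases hηξ.eq_or_lt with rfl | hηξ
  · simp [mixedDiff]
  have hlim {g : ℝ × ℝ → ℂ} (hg : Continuous g) :
      Tendsto (fun ε => mixedDiff g (η + ε) (ξ - ε) ε η) (𝓝[>] 0) (𝓝 (mixedDiff g η ξ 0 η)) := by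
    have : Continuous fun ε => mixedDiff g (η + ε) (ξ - ε) ε η := by
      unfold mixedDiff
      fun_prop
    simpa using (this.tendsto 0).mono_left nhdsWithin_le_nhds
  refine tendsto_nhds_unique_of_eventuallyEq (hlim hV)
    (hlim (continuous_primFst (continuous_primSnd hF))) ?_
  filter_upwards [Ioo_mem_nhdsGT hη₀, Ioo_mem_nhdsGT (half_pos (sub_pos.2 hηξ))]
    with ε hε hε'
  have h₁ : η + ε ≤ ξ - ε := by linarith [hε'.2]
  rw [mixedDiff_primFst_primSnd hF h₁ hε.2.le]
  refine h _ _ _ _ h₁ hε.2.le fun q hq => ?_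
  obtain ⟨⟨hq₁, hq₁'⟩, hq₂, hq₂'⟩ := hq
  exact mem_interior_charTriangle (hε.1.trans_le hq₂) (by linarith [hε.1]) (by linarith [hε.1])

/-- A solution, for times in `J`, of the complexified kernel equation in characteristic
coordinates with homogeneous boundary conditions: the difference of two kernels. -/
structure IsHomogeneousSolution (b : ℝ × ℝ → ℝ → ℂ) (c : ℂ) (J : Set ℝ) (v : ℝ × ℝ → ℝ → ℂ) :
    Prop where
  contDiffOn : ∀ t ∈ J, ContDiffOn ℝ 2 (fun p => v p t) charTriangle
  differentiableAt : ∀ p ∈ charTriangle, ∀ t ∈ J, DifferentiableAt ℝ (v p) t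
  four_mul_mixedDeriv : ∀ p ∈ interior charTriangle, ∀ t ∈ J,
    4 * mixedDeriv (fun p => v p t) p = b p t * v p t + c * deriv (v p) t
  eq_zero_right : ∀ x ∈ Icc (0 : ℝ) 2, ∀ t ∈ J, v (x, 0) t = 0
  eq_zero_self : ∀ x ∈ Icc (0 : ℝ) 1, ∀ t ∈ J, v (x, x) t = 0

namespace IsHomogeneousSolution

variable {b v : ℝ × ℝ → ℝ → ℂ} {c : ℂ} {a a' : ℝ}

lemma mono {J J' : Set ℝ} (hv : IsHomogeneousSolution b c J v) (hJ : J' ⊆ J) :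
    IsHomogeneousSolution b c J' v where
  contDiffOn t ht := hv.contDiffOn t (hJ ht)
  differentiableAt p hp t ht := hv.differentiableAt p hp t (hJ ht)
  four_mul_mixedDeriv p hp t ht := hv.four_mul_mixedDeriv p hp t (hJ ht)
  eq_zero_right x hx t ht := hv.eq_zero_right x hx t (hJ ht)
  eq_zero_self x hx t ht := hv.eq_zero_self x hx t (hJ ht)

lemma contDiffOn_interior {J : Set ℝ} (hv : IsHomogeneousSolution b c J v) {t : ℝ} (ht : t ∈ J) :
    ContDiffOn ℝ 2 (fun p => v p t) (interior charTriangle) :=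
  (hv.contDiffOn t ht).mono interior_subset

lemma exists_Icc_subset_forall_norm_le (hv : IsHomogeneousSolution b c (Ioo a a') v)
    (ha : a < a') : ∃ α β K, α < β ∧ Icc α β ⊆ Ioo a a' ∧ ∀ t ∈ Icc α β,
      (∀ p ∈ charTriangle, ‖v p t‖ ≤ K) ∧
      ∀ p ∈ interior charTriangle, ‖mixedDeriv (fun p => v p t) p‖ ≤ K := by
  let Rect := {R : (ℝ × ℝ) × ℝ × ℝ // uIcc R.1.1 R.1.2 ×ˢ uIcc R.2.1 R.2.2 ⊆ interior charTriangle}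
  let diff (R : Rect) (t : ℝ) : ℂ := mixedDiff (fun p => v p t) R.1.1.1 R.1.1.2 R.1.2.1 R.1.2.2
  let area (R : Rect) : ℝ := |R.1.2.2 - R.1.2.1| * |R.1.1.2 - R.1.1.1|
  have hv_cont : ∀ p ∈ charTriangle, ContinuousOn (v p) (Ioo a a') := fun p hp t ht =>
    (hv.differentiableAt p hp t ht).continuousAt.continuousWithinAt
  have hdiff (R : Rect) : ContinuousOn (diff R) (Ioo a a') := by
    have hcorner {x y : ℝ} (hx : x ∈ uIcc R.1.1.1 R.1.1.2) (hy : y ∈ uIcc R.1.2.1 R.1.2.2) :=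
      hv_cont (x, y) (interior_subset (R.2 ⟨hx, hy⟩))
    exact ((hcorner right_mem_uIcc right_mem_uIcc).sub
      (hcorner left_mem_uIcc right_mem_uIcc)).sub
        ((hcorner right_mem_uIcc left_mem_uIcc).sub (hcorner left_mem_uIcc left_mem_uIcc))
  have hbdd : ∀ t ∈ Ioo a a', ∃ K, (∀ p ∈ charTriangle, ‖v p t‖ ≤ K) ∧
      ∀ R, ‖diff R t‖ ≤ K * area R := fun t ht => by
    obtain ⟨K₁, hK₁⟩ := isCompact_charTriangle.exists_bound_of_continuousOn
      (hv.contDiffOn t ht).continuousOn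
    obtain ⟨K₂, hK₂⟩ := exists_norm_mixedDeriv_le isCompact_charTriangle
      (uniqueDiffOn_convex convex_charTriangle nonempty_interior_charTriangle) (hv.contDiffOn t ht)
    refine ⟨max K₁ K₂, fun p hp => le_max_of_le_left (hK₁ p hp), fun R => ?_⟩
    exact norm_mixedDiff_le isOpen_interior (hv.contDiffOn_interior ht)
      (fun p hp => le_max_of_le_right (hK₂ p hp)) R.2
  obtain ⟨α, β, K, hαβ, hsub, hK⟩ := exists_Icc_subset_forall_le_mul_of_continuousOn ha
    (g := Sum.elim (fun (p : charTriangle) t => ‖v p t‖) fun R t => ‖diff R t‖)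
    (w := Sum.elim (fun _ => 1) area)
    (Sum.rec (fun _ => zero_le_one) fun R => by simp only [Sum.elim_inr, area]; positivity)
    (Sum.rec (fun p => (hv_cont p p.2).norm) fun R => (hdiff R).norm)
    fun t ht => (hbdd t ht).imp fun K hK =>
      Sum.rec (fun p => (hK.1 p p.2).trans_eq (mul_one K).symm) hK.2
  have hvK : ∀ t ∈ Icc α β, ∀ p ∈ charTriangle, ‖v p t‖ ≤ K := fun t ht p hp =>
    (hK t ht (.inl ⟨p, hp⟩)).trans_eq (mul_one K)
  refine ⟨α, β, K, hαβ, hsub, fun t ht => ⟨hvK t ht, fun p hp => ?_⟩⟩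
  exact norm_mixedDeriv_le isOpen_interior (hv.contDiffOn_interior (hsub ht))
    ((norm_nonneg _).trans (hvK t ht p (interior_subset hp)))
    (fun a₁ b₁ a₂ b₂ hR => hK t ht (.inr ⟨((a₁, b₁), (a₂, b₂)), hR⟩)) hp

lemma exists_Icc_subset_lipschitzOnWith (hv : IsHomogeneousSolution b c (Ioo a a') v)
    (ha : a < a') (hc : c ≠ 0) (hb : ContinuousOn (uncurry b) (univ ×ˢ Ioo a a')) :
    ∃ α β L, α < β ∧ Icc α β ⊆ Ioo a a' ∧
      ∀ p ∈ charTriangle, LipschitzOnWith L (v p) (Icc α β) := by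
  obtain ⟨α, β, K, hαβ, hsub, hK⟩ := hv.exists_Icc_subset_forall_norm_le ha
  obtain ⟨B, hB⟩ := (isCompact_charTriangle.prod isCompact_Icc).exists_bound_of_continuousOn
    (hb.mono (prod_mono (subset_univ _) hsub))
  set C : ℝ := (4 * K + B * K) / ‖c‖
  have hderiv : ∀ p ∈ interior charTriangle, ∀ t ∈ Icc α β, ‖deriv (v p) t‖ ≤ C :=
    fun p hp t ht => by
      have hpT := interior_subset hp
      have hbp : ‖b p t‖ ≤ B := hB (p, t) ⟨hpT, ht⟩
      have heq : c * deriv (v p) t = 4 * mixedDeriv (fun p => v p t) p - b p t * v p t := by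
        rw [hv.four_mul_mixedDeriv p hp t (hsub ht)]
        ring
      rw [le_div_iff₀' (norm_pos_iff.2 hc), ← norm_mul, heq]
      refine (norm_sub_le _ _).trans ?_
      rw [norm_mul, norm_mul, Complex.norm_ofNat]
      have hB0 : 0 ≤ B := (norm_nonneg _).trans hbp
      gcongr
      exacts [(hK t ht).2 p hp, (hK t ht).1 p hpT]
  refine ⟨α, β, C.toNNReal, hαβ, hsub, fun p hp => .of_dist_le_mul fun s hs t ht => ?_⟩
  have hcont {t : ℝ} (ht : t ∈ Icc α β) :
      ContinuousOn (fun p => v p t) (closure (interior charTriangle)) := by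
    rw [closure_interior_charTriangle]
    exact (hv.contDiffOn t (hsub ht)).continuousOn
  rw [← closure_interior_charTriangle] at hp
  refine le_on_closure (fun q hq => ?_)
    (continuous_dist.comp_continuousOn ((hcont hs).prodMk (hcont ht))) continuousOn_const hp
  exact ((convex_Icc α β).lipschitzOnWith_of_nnnorm_deriv_le
    (fun t ht => hv.differentiableAt q (interior_subset hq) t (hsub ht))
    fun t ht => NNReal.coe_le_coe.1
      ((hderiv q hq t ht).trans (Real.le_coe_toNNReal C))).dist_le_mul s hs t ht

section lipschitz

variable {α β : ℝ} {L : NNReal} (hv : IsHomogeneousSolution b c (Icc α β) v)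
  (hL : ∀ p ∈ charTriangle, LipschitzOnWith L (v p) (Icc α β))
include hv hL

lemma continuousOn_uncurry : ContinuousOn (uncurry v) (charTriangle ×ˢ Icc α β) :=
  continuousOn_prod_of_continuousOn_lipschitzOnWith' _ L hL
    fun t ht => (hv.contDiffOn t ht).continuousOn

variable {a₁ b₁ a₂ b₂ : ℝ} (h₁ : a₁ ≤ b₁) (h₂ : a₂ ≤ b₂)
  (hR : Icc a₁ b₁ ×ˢ Icc a₂ b₂ ⊆ interior charTriangle)
include h₁ h₂ hR

lemma hasDerivAt_setIntegral (hc : c ≠ 0) (hb : ContinuousOn (uncurry b) (univ ×ˢ Icc α β)) {t : ℝ}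
    (ht : t ∈ Ioo α β) : HasDerivAt (fun t => ∫ q in Icc a₁ b₁ ×ˢ Icc a₂ b₂, v q t)
      (c⁻¹ * (4 * mixedDiff (fun p => v p t) a₁ b₁ a₂ b₂
        - ∫ q in Icc a₁ b₁ ×ˢ Icc a₂ b₂, b q t * v q t)) t := by
  have htI := Ioo_subset_Icc_self ht
  have hRT := hR.trans interior_subset
  have hRc : IsCompact (Icc a₁ b₁ ×ˢ Icc a₂ b₂) := isCompact_Icc.prod isCompact_Icc
  have hvc : ContinuousOn (fun p => v p t) (Icc a₁ b₁ ×ˢ Icc a₂ b₂) :=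
    (hv.contDiffOn t htI).continuousOn.mono hRT
  have hbv : ContinuousOn (fun p => b p t * v p t) (Icc a₁ b₁ ×ˢ Icc a₂ b₂) :=
    ContinuousOn.mul (f := fun p => b p t) (hb.comp (Continuous.prodMk_left t).continuousOn
      fun p _ => ⟨trivial, htI⟩) hvc
  have hmixed : ContinuousOn (mixedDeriv fun p => v p t) (Icc a₁ b₁ ×ˢ Icc a₂ b₂) :=
    (continuousOn_mixedDeriv isOpen_interior (hv.contDiffOn_interior htI)).mono hR
  have hderiv : ∀ p ∈ Icc a₁ b₁ ×ˢ Icc a₂ b₂, HasDerivAt (v p)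
      (c⁻¹ * (4 * mixedDeriv (fun p => v p t) p - b p t * v p t)) t := fun p hp => by
    rw [hv.four_mul_mixedDeriv p (hR hp) t htI, add_sub_cancel_left, inv_mul_cancel_left₀ hc]
    exact (hv.differentiableAt p (hRT hp) t htI).hasDerivAt
  have := hasDerivAt_setIntegral_of_lipschitzOnWith (μ := MeasureTheory.volume) hRc
    hRc.measurableSet
    (fun t ht => (hv.contDiffOn t ht).continuousOn.mono hRT) (fun p hp => hL p (hRT hp))
    (by fun_prop) hderiv (Icc_mem_nhds ht.1 ht.2)
  rwa [MeasureTheory.integral_const_mul, MeasureTheory.integral_sub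
    ((hmixed.integrableOn_compact hRc).const_mul 4) (hbv.integrableOn_compact hRc),
    MeasureTheory.integral_const_mul,
    ← mixedDiff_eq_setIntegral_mixedDeriv isOpen_interior (hv.contDiffOn_interior htI) h₁ h₂ hR]
    at this

lemma integral_mul_mixedDiff (hc : c ≠ 0) (hαβ : α ≤ β)
    (hb : ContinuousOn (uncurry b) (univ ×ˢ Icc α β)) {θ θ' : ℝ → ℂ}
    (hθ : ∀ t ∈ Icc α β, HasDerivAt θ (θ' t) t) (hθ' : ContinuousOn θ' (Icc α β))
    (hα : θ α = 0) (hβ : θ β = 0) :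
    ∫ t in α..β, θ t * mixedDiff (fun p => v p t) a₁ b₁ a₂ b₂
      = ∫ t in α..β, (θ t * (∫ q in Icc a₁ b₁ ×ˢ Icc a₂ b₂, b q t * v q t)
          - c * θ' t * ∫ q in Icc a₁ b₁ ×ˢ Icc a₂ b₂, v q t) / 4 := by
  set R := Icc a₁ b₁ ×ˢ Icc a₂ b₂
  have hRT : R ⊆ charTriangle := hR.trans interior_subset
  have hRc : IsCompact R := isCompact_Icc.prod isCompact_Icc
  have hvR : ContinuousOn (uncurry fun t q => v q t) (Icc α β ×ˢ R) :=
    (hv.continuousOn_uncurry hL).comp (f := Prod.swap) (by fun_prop) fun q hq => ⟨hRT hq.2, hq.1⟩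
  have hθc : ContinuousOn θ (Icc α β) := fun t ht => (hθ t ht).continuousAt.continuousWithinAt
  have hvI : ContinuousOn (fun t => ∫ q in R, v q t) (Icc α β) :=
    continuousOn_setIntegral hRc hRc.measurableSet hvR
  have hbvI : ContinuousOn (fun t => ∫ q in R, b q t * v q t) (Icc α β) :=
    continuousOn_setIntegral hRc hRc.measurableSet
      ((hb.comp (f := Prod.swap) (by fun_prop) fun q hq => ⟨trivial, hq.1⟩).mul hvR)
  have hvM := continuousOn_mixedDiff h₁ h₂ fun p hp => (hL p (hRT hp)).continuousOn
  have hint {f : ℝ → ℂ} (hf : ContinuousOn f (Icc α β)) :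
      IntervalIntegrable f MeasureTheory.volume α β := hf.intervalIntegrable_of_Icc hαβ
  have hparts := integral_mul_deriv_eq_deriv_mul_of_hasDerivAt
    (uIcc_of_le hαβ ▸ hθc) (uIcc_of_le hαβ ▸ hvI)
    (fun t ht => hθ t (Ioo_subset_Icc_self (by simpa [hαβ] using ht)))
    (fun t ht => hv.hasDerivAt_setIntegral hL h₁ h₂ hR hc hb (by simpa [hαβ] using ht))
    (hint hθ') (hint (continuousOn_const.mul ((continuousOn_const.mul hvM).sub hbvI)))
  rw [← sub_eq_zero, ← integral_sub (hint (by fun_prop)) (hint (by fun_prop))]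
  calc _ = c / 4 * ((∫ t in α..β, θ t * (c⁻¹ * (4 * mixedDiff (fun p => v p t) a₁ b₁ a₂ b₂
            - ∫ q in R, b q t * v q t))) + ∫ t in α..β, θ' t * ∫ q in R, v q t) := by
        rw [← integral_add (hint (by fun_prop)) (hint (by fun_prop)), ← integral_const_mul]
        refine integral_congr fun t _ => ?_
        field_simp
        ring
    _ = 0 := by
        rw [hparts, hα, hβ]
        ring

lemma mixedDiff_integral_mul (hc : c ≠ 0) (hαβ : α ≤ β)
    (hb : ContinuousOn (uncurry b) (univ ×ˢ Icc α β)) {θ θ' : ℝ → ℂ}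
    (hθ : ∀ t ∈ Icc α β, HasDerivAt θ (θ' t) t) (hθ' : ContinuousOn θ' (Icc α β))
    (hα : θ α = 0) (hβ : θ β = 0) :
    mixedDiff (fun p => ∫ t in α..β, v p t * θ t) a₁ b₁ a₂ b₂
      = ∫ q in Icc a₁ b₁ ×ˢ Icc a₂ b₂, ∫ t in α..β, v q t * (b q t * θ t - c * θ' t) / 4 := by
  have hRT := hR.trans interior_subset
  have hRc : IsCompact (Icc a₁ b₁ ×ˢ Icc a₂ b₂) := isCompact_Icc.prod isCompact_Icc
  have hθc : ContinuousOn θ (Icc α β) := fun t ht => (hθ t ht).continuousAt.continuousWithinAt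
  have hswap : MapsTo Prod.swap (Icc α β ×ˢ (Icc a₁ b₁ ×ˢ Icc a₂ b₂)) (charTriangle ×ˢ Icc α β) :=
    fun q hq => ⟨hRT hq.2, hq.1⟩
  have hvR := (hv.continuousOn_uncurry hL).comp continuous_swap.continuousOn hswap
  have hbR := hb.comp continuous_swap.continuousOn
    (hswap.mono_right (prod_mono_left (subset_univ _)))
  have hfst {f : ℝ → ℂ} (hf : ContinuousOn f (Icc α β)) : ContinuousOn (fun q => f q.1)
      (Icc α β ×ˢ (Icc a₁ b₁ ×ˢ Icc a₂ b₂)) := hf.comp continuous_fst.continuousOn fun q hq => hq.1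
  have hsource : ContinuousOn (uncurry fun t q => v q t * (b q t * θ t - c * θ' t) / 4)
      (Icc α β ×ˢ (Icc a₁ b₁ ×ˢ Icc a₂ b₂)) :=
    (hvR.mul ((hbR.mul (hfst hθc)).sub (continuousOn_const.mul (hfst hθ')))).div_const 4
  rw [mixedDiff_intervalIntegral (f := fun p t => v p t * θ t) h₁ h₂ fun p hp =>
    ((hL p (hRT hp)).continuousOn.mul hθc).intervalIntegrable_of_Icc hαβ,
    ← intervalIntegral_setIntegral_swap hαβ hRc hRc.measurableSet hsource]
  refine (integral_congr fun t _ => ?_).trans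
    ((hv.integral_mul_mixedDiff hL h₁ h₂ hR hc hαβ hb hθ hθ' hα hβ).trans
      (integral_congr fun t ht => ?_))
  · simp only [mixedDiff]
    ring
  · have hsec {f : ℝ × ℝ → ℝ → ℂ}
        (hf : ContinuousOn (uncurry f ∘ Prod.swap) (Icc α β ×ˢ (Icc a₁ b₁ ×ˢ Icc a₂ b₂))) :
        MeasureTheory.IntegrableOn (fun q => f q t) (Icc a₁ b₁ ×ˢ Icc a₂ b₂) :=
      (hf.comp (Continuous.prodMk_right t).continuousOn
        fun q hq => ⟨uIcc_of_le hαβ ▸ ht, hq⟩).integrableOn_compact hRc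
    have hbv : MeasureTheory.IntegrableOn (fun q => b q t * v q t) (Icc a₁ b₁ ×ˢ Icc a₂ b₂) :=
      hsec (f := fun q t => b q t * v q t) (hbR.mul hvR)
    rw [← MeasureTheory.integral_const_mul, ← MeasureTheory.integral_const_mul,
      ← MeasureTheory.integral_sub (hbv.const_mul _) ((hsec hvR).const_mul _),
      ← MeasureTheory.integral_div]
    congr! 2
    ring

end lipschitz

end IsHomogeneousSolution

/-- A continuous function solving on `charTriangle` the homogeneous kernel equation, in its
integrated form `goursat`, after integration against every `C¹` function of time vanishing at `α`
and `β`; the time derivative falls on the test function. -/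
structure IsWeakSolution (b : ℝ × ℝ → ℝ → ℂ) (c : ℂ) (α β : ℝ) (u : ℝ × ℝ → ℝ → ℂ) : Prop where
  continuous : Continuous (uncurry u)
  integral_mul : ∀ θ θ' : ℝ → ℂ, (∀ t ∈ Icc α β, HasDerivAt θ (θ' t) t) →
    ContinuousOn θ' (Icc α β) → θ α = 0 → θ β = 0 → ∀ p ∈ charTriangle,
      ∫ t in α..β, u p t * θ t
        = goursat 0 (fun q => ∫ t in α..β, u q t * (b q t * θ t - c * θ' t) / 4) p

lemma IsHomogeneousSolution.isWeakSolution {b u v : ℝ × ℝ → ℝ → ℂ} {c : ℂ} {α β : ℝ} {L : NNReal}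
    (hv : IsHomogeneousSolution b c (Icc α β) v)
    (hL : ∀ p ∈ charTriangle, LipschitzOnWith L (v p) (Icc α β)) (hc : c ≠ 0) (hαβ : α ≤ β)
    (hb : ContinuousOn (uncurry b) (univ ×ˢ Icc α β)) (hu : Continuous (uncurry u))
    (huv : ∀ p ∈ charTriangle, ∀ t ∈ Icc α β, u p t = v p t) : IsWeakSolution b c α β u := by
  refine ⟨hu, fun θ θ' hθ hθ' hα hβ p hp => ?_⟩
  have hθc : ContinuousOn θ (Icc α β) := fun t ht => (hθ t ht).continuousAt.continuousWithinAt
  have hsnd {f : ℝ → ℂ} (hf : ContinuousOn f (Icc α β)) :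
      ContinuousOn (fun q : (ℝ × ℝ) × ℝ => f q.2) (univ ×ˢ Icc α β) :=
    hf.comp continuous_snd.continuousOn fun q hq => hq.2
  have hV := continuous_intervalIntegral_of_continuousOn (f := fun p t => u p t * θ t) hαβ
    (hu.continuousOn.mul (hsnd hθc))
  have hF := continuous_intervalIntegral_of_continuousOn
    (f := fun q t => u q t * (b q t * θ t - c * θ' t) / 4) hαβ
    ((hu.continuousOn.mul ((hb.mul (hsnd hθc)).sub
      (continuousOn_const.mul (hsnd hθ')))).div_const 4)
  have hcongr {q : ℝ × ℝ} (hq : q ∈ charTriangle) (f : ℝ → ℂ) :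
      ∫ t in α..β, u q t * f t = ∫ t in α..β, v q t * f t :=
    integral_congr fun t ht => congrArg (· * f t) (huv q hq t (uIcc_of_le hαβ ▸ ht))
  have hvanish {q : ℝ × ℝ} (hq : q ∈ charTriangle) (h : ∀ t ∈ Icc α β, v q t = 0) :
      ∫ t in α..β, u q t * θ t = 0 := by
    rw [hcongr hq]
    refine integral_zero_ae (.of_forall fun t ht => ?_)
    rw [h t (Ioc_subset_Icc_self (uIoc_of_le hαβ ▸ ht)), zero_mul]
  refine eq_goursat_of_mixedDiff_eq hV hF (fun x hx => hvanish ⟨le_rfl, hx.1, by simpa using hx.2⟩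
    (hv.eq_zero_right x hx)) (fun x hx => hvanish ⟨hx.1, le_rfl, by dsimp; linarith [hx.2]⟩
    (hv.eq_zero_self x hx)) (fun a₁ b₁ a₂ b₂ h₁ h₂ hR => ?_) hp
  have hRT := hR.trans interior_subset
  rw [mixedDiff_congr h₁ h₂ fun q hq => hcongr (hRT hq) θ,
    hv.mixedDiff_integral_mul hL h₁ h₂ hR hc hαβ hb hθ hθ' hα hβ]
  refine MeasureTheory.setIntegral_congr_fun (measurableSet_Icc.prod measurableSet_Icc)
    fun q hq => ?_
  simp only [mul_div_assoc]
  exact (hcongr (hRT hq) _).symm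

lemma IsHomogeneousSolution.exists_isWeakSolution {b v : ℝ × ℝ → ℝ → ℂ} {c : ℂ} {a a' : ℝ}
    (hv : IsHomogeneousSolution b c (Ioo a a') v) (ha : a < a') (hc : c ≠ 0)
    (hb : ContinuousOn (uncurry b) (univ ×ˢ Ioo a a')) :
    ∃ α β u, α < β ∧ Icc α β ⊆ Ioo a a' ∧ IsWeakSolution b c α β u ∧
      ∀ p ∈ charTriangle, ∀ t ∈ Icc α β, u p t = v p t := by
  obtain ⟨α, β, L, hαβ, hsub, hL⟩ := hv.exists_Icc_subset_lipschitzOnWith ha hc hb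
  have hv := hv.mono hsub
  obtain ⟨g, hg⟩ := ContinuousMap.exists_restrict_eq
    (isCompact_charTriangle.isClosed.prod isClosed_Icc)
    ⟨_, (hv.continuousOn_uncurry hL).domRestrict⟩
  have hgv : ∀ p ∈ charTriangle, ∀ t ∈ Icc α β, g (p, t) = v p t := fun p hp t ht =>
    DFunLike.congr_fun hg ⟨(p, t), hp, ht⟩
  exact ⟨α, β, curry g, hαβ, hsub, hv.isWeakSolution hL hc hαβ.le
    (hb.mono (prod_mono_right hsub)) g.continuous hgv, hgv⟩

lemma integral_div_pow_mul_le_integral_pow {f : ℝ → ℝ} {α β : ℝ} (hαβ : α < β)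
    (hf : ContinuousOn f (Icc α β)) (hnonneg : ∀ t ∈ Icc α β, 0 ≤ f t) (m : ℕ) :
    ((∫ t in α..β, f t) / (β - α)) ^ m * (β - α) ≤ ∫ t in α..β, f t ^ m := by
  have hint {g : ℝ → ℝ} (hg : ContinuousOn g (Icc α β)) :
      MeasureTheory.IntegrableOn g (uIoc α β) :=
    (uIoc_of_le hαβ.le).symm ▸ hg.integrableOn_Icc.mono_set Ioc_subset_Icc_self
  have := (convexOn_pow m).map_set_average_le (continuousOn_pow m) isClosed_Ici
    (μ := MeasureTheory.volume) (t := uIoc α β) (f := f) (by simp [uIoc_of_le hαβ.le, hαβ])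
    (by simp [uIoc_of_le hαβ.le])
    ((MeasureTheory.ae_restrict_iff' measurableSet_uIoc).2 (.of_forall fun t ht =>
      hnonneg t (Ioc_subset_Icc_self (uIoc_of_le hαβ.le ▸ ht)))) (hint hf) (hint (hf.pow m))
  rwa [interval_average_eq_div, interval_average_eq_div, le_div_iff₀ (sub_pos.2 hαβ)] at this

/-- Powers of a function peaked at `t₀` decay only geometrically, so an integral against them can
decay faster than geometrically only if the integrand vanishes at `t₀`. -/
lemma eq_zero_of_norm_integral_pow_smul_le {E : Type*} [NormedAddCommGroup E] [NormedSpace ℝ E]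
    [CompleteSpace E] {f : ℝ → ℝ} {g : ℝ → E} {α β t₀ A C : ℝ} (ht₀ : t₀ ∈ Ioo α β)
    (hf : ContinuousOn f (Icc α β)) (hnonneg : ∀ t ∈ Icc α β, 0 ≤ f t)
    (hpos : ∀ t ∈ Ioo α β, 0 < f t) (hmax : ∀ t ∈ Icc α β, t ≠ t₀ → f t < f t₀)
    (hg : ContinuousOn g (Icc α β))
    (h : ∀ m : ℕ, ‖∫ t in α..β, f t ^ m • g t‖ ≤ A * (C ^ m / m.factorial)) : g t₀ = 0 := by
  have hαβ : α < β := ht₀.1.trans ht₀.2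
  have hfint : IntervalIntegrable f MeasureTheory.volume α β :=
    hf.intervalIntegrable_of_Icc hαβ.le
  set κ := (∫ t in α..β, f t) / (β - α)
  have hκ : 0 < κ :=
    div_pos (intervalIntegral_pos_of_pos_on hfint hpos hαβ) (sub_pos.2 hαβ)
  have hlim := tendsto_setIntegral_pow_smul_of_unique_maximum_of_isCompact_of_continuousOn
    (μ := MeasureTheory.volume) isCompact_Icc hf hmax hnonneg (hpos t₀ ht₀)
    (by rw [interior_Icc, closure_Ioo hαβ.ne]; exact Ioo_subset_Icc_self ht₀) hg
  simp_rw [MeasureTheory.integral_Icc_eq_integral_Ioc, ← integral_of_le hαβ.le] at hlim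
  refine tendsto_nhds_unique hlim (squeeze_zero_norm
    (a := fun m => A / (β - α) * ((C / κ) ^ m / m.factorial)) (fun m => ?_) ?_)
  · have hlow := integral_div_pow_mul_le_integral_pow hαβ hf hnonneg m
    have hsub := sub_pos.2 hαβ
    have hden : 0 < κ ^ m * (β - α) := by positivity
    rw [norm_smul, norm_inv, Real.norm_of_nonneg (hden.le.trans hlow), inv_mul_eq_div]
    calc _ ≤ A * (C ^ m / m.factorial) / (κ ^ m * (β - α)) := by
          gcongr
          · exact (norm_nonneg _).trans (h m)
          · exact h m
      _ = A / (β - α) * ((C / κ) ^ m / m.factorial) := by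
          rw [div_pow C]
          field_simp
  · simpa using (FloorSemiring.tendsto_pow_div_factorial_atTop (C / κ)).const_mul (A / (β - α))

/-- The function left over when `φ ^ n` is split off from `(b q * θ - c * θ') / 4`, the source term
of `IsWeakSolution`, for the test function `θ = φ ^ (n + 1) * h`. -/
noncomputable def testSource (b : ℝ × ℝ → ℂ → ℂ) (c : ℂ) (φ : ℂ → ℂ) (n : ℕ) (h : ℂ → ℂ)
    (q : ℝ × ℝ) (z : ℂ) : ℂ :=
  (φ z * b q z * h z - c * ((n + 1) * deriv φ z * h z + φ z * deriv h z)) / 4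

section testSource

variable {b : ℝ × ℝ → ℂ → ℂ} {c z₀ : ℂ} {φ h : ℂ → ℂ} {q : ℝ × ℝ} {B H P r δ : ℝ}

lemma mul_pow_mul_sub_mul_deriv_eq_pow_mul_testSource {z : ℂ} (hφ : DifferentiableAt ℂ φ z)
    (hh : DifferentiableAt ℂ h z) (n : ℕ) :
    (b q z * (φ z ^ (n + 1) * h z) - c * deriv (fun z => φ z ^ (n + 1) * h z) z) / 4
      = φ z ^ n * testSource b c φ n h q z := by
  have hderiv := ((hφ.hasDerivAt.pow (n + 1)).mul hh.hasDerivAt).deriv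
  simp only [Pi.pow_def, Pi.mul_def] at hderiv
  rw [hderiv, testSource]
  push_cast [Nat.add_sub_cancel]
  ring

lemma differentiableOn_testSource {U : Set ℂ} (hU : IsOpen U) (hb : DifferentiableOn ℂ (b q) U)
    (hφ : DifferentiableOn ℂ φ U) (hh : DifferentiableOn ℂ h U) (n : ℕ) :
    DifferentiableOn ℂ (testSource b c φ n h q) U := by
  have hφ' := hφ.deriv hU
  have hh' := hh.deriv hU
  unfold testSource
  fun_prop

lemma norm_testSource_le (hδ : 0 < δ) (hB : ∀ z ∈ ball z₀ r, ‖b q z‖ ≤ B)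
    (hφ : ∀ z ∈ ball z₀ r, ‖φ z‖ ≤ P) (hφ' : ∀ z ∈ ball z₀ r, ‖deriv φ z‖ ≤ P)
    (hh : DifferentiableOn ℂ h (ball z₀ (r + δ))) (hH : ∀ z ∈ ball z₀ (r + δ), ‖h z‖ ≤ H) (n : ℕ)
    {z : ℂ} (hz : z ∈ ball z₀ r) :
    ‖testSource b c φ n h q z‖ ≤ P * (B + ‖c‖ * (n + 1 + 1 / δ)) / 4 * H := by
  have hsub : closedBall z δ ⊆ ball z₀ (r + δ) :=
    Metric.closedBall_subset_ball' (by linarith [Metric.mem_ball.1 hz])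
  have hhz : ‖h z‖ ≤ H := hH z (hsub (Metric.mem_closedBall_self hδ.le))
  have hh'z : ‖deriv h z‖ ≤ H / δ := Complex.norm_deriv_le_of_forall_mem_sphere_norm_le hδ
    (hh.diffContOnCl_ball hsub) fun w hw => hH w (hsub (Metric.sphere_subset_closedBall hw))
  have hP : 0 ≤ P := (norm_nonneg _).trans (hφ z hz)
  have hB0 : 0 ≤ B := (norm_nonneg _).trans (hB z hz)
  have hn : ‖((n : ℂ) + 1)‖ = n + 1 := mod_cast Complex.norm_natCast (n + 1)
  rw [testSource, norm_div, Complex.norm_ofNat]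
  calc _ ≤ (P * B * H + ‖c‖ * ((n + 1) * P * H + P * (H / δ))) / 4 := by
        gcongr
        refine (norm_sub_le _ _).trans (add_le_add ?_ ?_)
        · rw [norm_mul, norm_mul]
          gcongr
          exacts [hφ z hz, hB z hz]
        · rw [norm_mul]
          gcongr
          refine (norm_add_le _ _).trans (add_le_add ?_ ?_)
          · rw [norm_mul, norm_mul, hn]
            gcongr
            exact hφ' z hz
          · rw [norm_mul]
            gcongr
            exact hφ z hz
    _ = _ := by ring

end testSource

lemma goursatRect_subset_charTriangle {p : ℝ × ℝ} (hp : p ∈ charTriangle) :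
    goursatRect p ⊆ charTriangle := by
  obtain ⟨h₁, h₂, h₃⟩ := hp
  rintro q ⟨hq₁, hq₂⟩
  rw [uIcc_of_le h₂] at hq₁
  rw [uIcc_of_le h₁] at hq₂
  exact ⟨hq₂.1, hq₂.2.trans hq₁.1, by linarith [hq₁.2, hq₂.2]⟩

namespace IsWeakSolution

variable {b : ℝ × ℝ → ℂ → ℂ} {c z₀ : ℂ} {α β : ℝ} {u : ℝ × ℝ → ℝ → ℂ} {φ : ℂ → ℂ} {B P r R : ℝ}

lemma integral_mul_of_differentiableOn (hu : IsWeakSolution (fun p t => b p t) c α β u)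
    {U : Set ℂ} (hU : IsOpen U) (hαβU : ∀ t ∈ Icc α β, (t : ℂ) ∈ U) {θ : ℂ → ℂ}
    (hθ : DifferentiableOn ℂ θ U) (hα : θ α = 0) (hβ : θ β = 0) {p : ℝ × ℝ}
    (hp : p ∈ charTriangle) :
    ∫ t in α..β, u p t * θ t
      = goursat 0 (fun q => ∫ t in α..β, u q t * (b q t * θ t - c * deriv θ t) / 4) p :=
  hu.integral_mul (fun t => θ t) (fun t => deriv θ t)
    (fun t ht => (hθ.differentiableAt (hU.mem_nhds (hαβU t ht))).hasDerivAt.comp_ofReal)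
    ((hθ.deriv hU).continuousOn.comp Complex.continuous_ofReal.continuousOn hαβU) hα hβ p hp

lemma norm_integral_pow_succ_mul_le (hu : IsWeakSolution (fun p t => b p t) c α β u) {U : Set ℂ}
    (hU : IsOpen U) (hαβ : α ≤ β) (hαβU : ∀ t ∈ Icc α β, (t : ℂ) ∈ U)
    (hφ : DifferentiableOn ℂ φ U) {h : ℂ → ℂ} (hh : DifferentiableOn ℂ h U) (hα : φ α = 0)
    (hβ : φ β = 0) {C : ℝ} (hC : 0 ≤ C) (n : ℕ) (hn : ∀ q ∈ charTriangle,
      ‖∫ t in α..β, u q t * (φ t ^ n * testSource b c φ n h q t)‖ ≤ C * goursatWeight q ^ n)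
    {p : ℝ × ℝ} (hp : p ∈ charTriangle) :
    ‖∫ t in α..β, u p t * (φ t ^ (n + 1) * h t)‖
      ≤ C * goursatWeight p ^ (n + 1) / (n + 1) ^ 2 := by
  rw [hu.integral_mul_of_differentiableOn (θ := fun z => φ z ^ (n + 1) * h z) hU hαβU
    ((hφ.pow (n + 1)).mul hh) (by simp [hα]) (by simp [hβ]) hp]
  refine norm_goursat_le hC fun q hq => ?_
  refine (congrArg norm (integral_congr fun t ht => ?_)).trans_le
    (hn q (goursatRect_subset_charTriangle hp hq))
  have hnhds := hU.mem_nhds (hαβU t (uIcc_of_le hαβ ▸ ht))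
  simp only [mul_div_assoc]
  rw [← mul_pow_mul_sub_mul_deriv_eq_pow_mul_testSource (hφ.differentiableAt hnhds)
    (hh.differentiableAt hnhds)]

section powers

variable (hu : IsWeakSolution (fun p t => b p t) c α β u) (hαβ : α ≤ β)
  (hαβr : ∀ t ∈ Icc α β, (t : ℂ) ∈ ball z₀ r)
  (hb : ∀ q ∈ charTriangle, DifferentiableOn ℂ (b q) (ball z₀ R))
  (hB : ∀ q ∈ charTriangle, ∀ z ∈ ball z₀ R, ‖b q z‖ ≤ B)
  (hφ : DifferentiableOn ℂ φ (ball z₀ R)) (hP : ∀ z ∈ ball z₀ R, ‖φ z‖ ≤ P)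
  (hP' : ∀ z ∈ ball z₀ R, ‖deriv φ z‖ ≤ P) (hα : φ α = 0) (hβ : φ β = 0)
include hu hαβ hαβr hb hB hφ hP hP' hα hβ

/-- Each factor `φ` split off costs a width `δ` of the disc of holomorphy of the test function. -/
lemma norm_integral_pow_mul_le {N δ D : ℝ}
    (hN : ∀ p ∈ charTriangle, ∀ t ∈ Icc α β, ‖u p t‖ ≤ N) (hδ : 0 < δ) (n : ℕ)
    (hR : r + n * δ ≤ R) (hD : P * (B + ‖c‖ * (n + 1 / δ)) / 4 ≤ D) {h : ℂ → ℂ} {H : ℝ}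
    (hh : DifferentiableOn ℂ h (ball z₀ (r + n * δ))) (hH : ∀ z ∈ ball z₀ (r + n * δ), ‖h z‖ ≤ H)
    {p : ℝ × ℝ} (hp : p ∈ charTriangle) :
    ‖∫ t in α..β, u p t * (φ t ^ n * h t)‖
      ≤ N * (β - α) * H * D ^ n / n.factorial ^ 2 * goursatWeight p ^ n := by
  have hN0 : 0 ≤ N := (norm_nonneg _).trans (hN p hp α ⟨le_rfl, hαβ⟩)
  have hαβ0 := sub_nonneg.2 hαβ
  induction n generalizing h H p with
  | zero =>
    simp only [Nat.cast_zero, zero_mul, add_zero] at hh hH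
    refine (norm_integral_le_of_norm_le_const (C := N * H) fun t ht => ?_).trans_eq ?_
    · have ht := Ioc_subset_Icc_self (uIoc_of_le hαβ ▸ ht)
      rw [pow_zero, one_mul, norm_mul]
      exact mul_le_mul (hN p hp t ht) (hH t (hαβr t ht)) (norm_nonneg _) hN0
    · rw [abs_of_nonneg hαβ0, Nat.factorial_zero]
      push_cast
      ring
  | succ n ih =>
    push_cast at hR hD hh hH
    rw [add_one_mul, ← add_assoc] at hR hh hH
    have hsub : ball z₀ (r + n * δ) ⊆ ball z₀ (r + n * δ + δ) :=
      Metric.ball_subset_ball (by linarith)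
    have hsubR : ball z₀ (r + n * δ) ⊆ ball z₀ R := Metric.ball_subset_ball (by linarith)
    have hαβn : ∀ t ∈ Icc α β, (t : ℂ) ∈ ball z₀ (r + n * δ) := fun t ht =>
      Metric.ball_subset_ball (le_add_of_nonneg_right (by positivity)) (hαβr t ht)
    have hαn := hαβn α ⟨le_rfl, hαβ⟩
    have hP0 : 0 ≤ P := (norm_nonneg _).trans (hP α (hsubR hαn))
    have hB0 : 0 ≤ B := (norm_nonneg _).trans (hB p hp α (hsubR hαn))
    have hH0 : 0 ≤ H := (norm_nonneg _).trans (hH α (hsub hαn))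
    have hD' : P * (B + ‖c‖ * (n + 1 / δ)) / 4 ≤ D := le_trans (by gcongr; linarith) hD
    have hD0 : 0 ≤ D := le_trans (by positivity) hD'
    have hφn := hφ.mono hsubR
    have hhn := hh.mono hsub
    refine (hu.norm_integral_pow_succ_mul_le Metric.isOpen_ball hαβ hαβn hφn hhn hα hβ
      (C := N * (β - α) * (D * H) * D ^ n / n.factorial ^ 2) (by positivity) n
      (fun q hq => ih (by linarith) hD'
        (differentiableOn_testSource Metric.isOpen_ball ((hb q hq).mono hsubR) hφn hhn n)
        (fun z hz => (norm_testSource_le hδ (fun z hz => hB q hq z (hsubR hz))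
          (fun z hz => hP z (hsubR hz)) (fun z hz => hP' z (hsubR hz)) hh hH n hz).trans
            (mul_le_mul_of_nonneg_right hD hH0)) hq) hp).trans_eq ?_
    rw [Nat.factorial_succ]
    push_cast
    field_simp
    ring

lemma exists_norm_integral_pow_le (hr : r < R) {p : ℝ × ℝ} (hp : p ∈ charTriangle) :
    ∃ A C : ℝ, ∀ m : ℕ, ‖∫ t in α..β, u p t * φ t ^ m‖ ≤ A * (C ^ m / m.factorial) := by
  obtain ⟨N, hN⟩ := (isCompact_charTriangle.prod (isCompact_Icc (a := α) (b := β))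
    ).exists_bound_of_continuousOn hu.continuous.continuousOn
  let D := P * (B + ‖c‖ * (1 + 1 / (R - r))) / 4
  have hαR : (α : ℂ) ∈ ball z₀ R := Metric.ball_subset_ball hr.le (hαβr α ⟨le_rfl, hαβ⟩)
  have hP0 : 0 ≤ P := (norm_nonneg _).trans (hP α hαR)
  have hB0 : 0 ≤ B := (norm_nonneg _).trans (hB p hp α hαR)
  have hN0 : 0 ≤ N := (norm_nonneg _).trans (hN (p, α) ⟨hp, le_rfl, hαβ⟩)
  have hW := goursatWeight_nonneg p
  have : 0 ≤ β - α := sub_nonneg.2 hαβ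
  have : 0 < R - r := sub_pos.2 hr
  refine ⟨N * (β - α) * Real.exp 1, Real.exp 1 * D * goursatWeight p, fun m => ?_⟩
  have hR : r + m * ((R - r) / (m + 1)) ≤ R := by
    have : (m : ℝ) / (m + 1) * (R - r) ≤ 1 * (R - r) := by
      gcongr
      rw [div_le_one (by positivity)]
      linarith
    linarith [mul_div_left_comm (m : ℝ) (R - r) (m + 1), this]
  have hD : P * (B + ‖c‖ * (m + 1 / ((R - r) / (m + 1)))) / 4 ≤ (m + 1) * D := by
    calc _ = (m + 1) * D - P * (m * B + ‖c‖) / 4 := by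
          simp only [D, one_div_div]
          ring
      _ ≤ _ := sub_le_self _ (by positivity)
  have : 0 ≤ D := by positivity
  clear_value D
  have := hu.norm_integral_pow_mul_le hαβ hαβr hb hB hφ hP hP' hα hβ
    (fun p hp t ht => hN (p, t) ⟨hp, ht⟩) (by positivity) m hR hD
    (differentiableOn_const 1) (fun _ _ => norm_one.le) hp
  simp only [mul_one] at this
  calc _ ≤ N * (β - α) * ((m + 1) ^ m / m.factorial)
          * ((D * goursatWeight p) ^ m / m.factorial) := this.trans_eq (by rw [mul_pow]; ring)
    _ ≤ N * (β - α) * Real.exp (m + 1) * ((D * goursatWeight p) ^ m / m.factorial) := by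
        gcongr
        exact Real.pow_div_factorial_le_exp _ (by positivity) m
    _ = _ := by
        rw [Real.exp_add, ← Real.exp_one_pow]
        ring

end powers

lemma eq_zero_midpoint (hu : IsWeakSolution (fun p t => b p t) c α β u) (hαβ : α < β)
    (hαβr : ∀ t ∈ Icc α β, (t : ℂ) ∈ ball z₀ r) (hr : r < R)
    (hb : ∀ q ∈ charTriangle, DifferentiableOn ℂ (b q) (ball z₀ R))
    (hB : ∀ q ∈ charTriangle, ∀ z ∈ ball z₀ R, ‖b q z‖ ≤ B) {p : ℝ × ℝ} (hp : p ∈ charTriangle) :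
    u p ((α + β) / 2) = 0 := by
  let φ : ℂ → ℂ := fun z => (z - α) * (β - z)
  have hφ : Differentiable ℂ φ := by fun_prop
  obtain ⟨P₁, hP₁⟩ := (isCompact_closedBall z₀ R).exists_bound_of_continuousOn
    hφ.continuous.continuousOn
  obtain ⟨P₂, hP₂⟩ := (isCompact_closedBall z₀ R).exists_bound_of_continuousOn
    ((hφ.contDiff (n := 1)).continuous_deriv le_rfl).continuousOn
  obtain ⟨A, C, hAC⟩ := hu.exists_norm_integral_pow_le hαβ.le hαβr hb hB hφ.differentiableOn
    (fun z hz => le_max_of_le_left (hP₁ z (Metric.ball_subset_closedBall hz)))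
    (fun z hz => le_max_of_le_right (hP₂ z (Metric.ball_subset_closedBall hz)))
    (by simp [φ]) (by simp [φ]) hr hp
  refine eq_zero_of_norm_integral_pow_smul_le (f := fun t => (t - α) * (β - t)) (A := A) (C := C)
    ⟨left_lt_add_div_two.2 hαβ, add_div_two_lt_right.2 hαβ⟩ (by fun_prop)
    (fun t ht => mul_nonneg (sub_nonneg.2 ht.1) (sub_nonneg.2 ht.2))
    (fun t ht => mul_pos (sub_pos.2 ht.1) (sub_pos.2 ht.2))
    (fun t _ ht => ?_) (hu.continuous.comp (Continuous.prodMk_right p)).continuousOn fun m => ?_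
  · nlinarith [sq_pos_of_ne_zero (sub_ne_zero.2 ht)]
  · refine (congrArg norm (integral_congr fun t _ => ?_)).trans_le (hAC m)
    simp only [φ, Complex.real_smul]
    push_cast
    ring

end IsWeakSolution

namespace IsHomogeneousSolution

variable {b : ℝ × ℝ → ℂ → ℂ} {v : ℝ × ℝ → ℝ → ℂ} {c : ℂ} {a a' : ℝ}

lemma exists_forall_eq_zero (hv : IsHomogeneousSolution (fun p t => b p t) c (Ioo a a') v)
    (haa' : a < a') (hc : c ≠ 0) (ha : -1 ≤ a) (ha' : a' ≤ 1)
    (hb : IsHolomorphicFamily (ball 0 1) b) : ∃ t ∈ Ioo a a', ∀ p ∈ charTriangle, v p t = 0 := by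
  have hball : ∀ t ∈ Ioo a a', (t : ℂ) ∈ ball 0 1 := fun t ht => by
    rw [mem_ball_zero_iff, Complex.norm_real, Real.norm_eq_abs, abs_lt]
    exact ⟨ha.trans_lt ht.1, ht.2.trans_le ha'⟩
  obtain ⟨α, β, u, hαβ, hsub, hu, huv⟩ := hv.exists_isWeakSolution haa' hc
    (hb.continuousOn.comp (f := Prod.map id Complex.ofReal) (by fun_prop)
      fun q hq => ⟨trivial, hball q.2 hq.2⟩)
  obtain ⟨r, hr, hαβr⟩ := exists_lt_subset_ball
    (isCompact_Icc.image Complex.continuous_ofReal).isClosed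
    (image_subset_iff.2 fun t ht => hball t (hsub ht))
  obtain ⟨R, hrR, hR⟩ := exists_between hr
  obtain ⟨B, hB⟩ := (isCompact_charTriangle.prod (isCompact_closedBall (0 : ℂ) R)
    ).exists_bound_of_continuousOn
      (hb.continuousOn.mono (prod_mono (subset_univ _) (Metric.closedBall_subset_ball hR)))
  have hmid : (α + β) / 2 ∈ Icc α β := ⟨by linarith, by linarith⟩
  refine ⟨(α + β) / 2, hsub hmid, fun p hp => ?_⟩
  rw [← huv p hp _ hmid]
  exact hu.eq_zero_midpoint hαβ (image_subset_iff.1 hαβr) hrR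
    (fun q _ => (hb.differentiableOn q).mono (Metric.ball_subset_ball hR.le))
    (fun q hq z hz => hB (q, z) ⟨hq, Metric.ball_subset_closedBall hz⟩) hp

theorem eq_zero (hv : IsHomogeneousSolution (fun p t => b p t) c (Ioo a a') v) (hc : c ≠ 0)
    (ha : -1 ≤ a) (ha' : a' ≤ 1) (hb : IsHolomorphicFamily (ball 0 1) b) {p : ℝ × ℝ}
    (hp : p ∈ charTriangle) {t : ℝ} (ht : t ∈ Ioo a a') : v p t = 0 := by
  by_contra hvt
  obtain ⟨l, u, htlu, hlu⟩ := mem_nhds_iff_exists_Ioo_subset.1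
    (((hv.differentiableAt p hp t ht).continuousAt.eventually_ne hvt).and (Ioo_mem_nhds ht.1 ht.2))
  have hlu' : Ioo l u ⊆ Ioo a a' := fun s hs => (hlu hs).2
  obtain ⟨hal, hua'⟩ := (Ioo_subset_Ioo_iff (htlu.1.trans htlu.2)).1 hlu'
  obtain ⟨s, hs, hvs⟩ := (hv.mono hlu').exists_forall_eq_zero (htlu.1.trans htlu.2) hc
    (ha.trans hal) (hua'.trans ha') hb
  exact (hlu hs).1 (hvs p hp)

end IsHomogeneousSolution

/-! ### The kernel pair -/

lemma mixedDeriv_clm_comp {E F : Type*} [NormedAddCommGroup E] [NormedSpace ℝ E]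
    [NormedAddCommGroup F] [NormedSpace ℝ F] (L : E →L[ℝ] F) {g : ℝ × ℝ → E} {p : ℝ × ℝ}
    (hg : ContDiffAt ℝ 2 g p) : mixedDeriv (fun q => L (g q)) p = L (mixedDeriv g p) := by
  have hfderiv : fderiv ℝ (fun q => L (g q)) =ᶠ[𝓝 p] fun q => L.comp (fderiv ℝ g q) :=
    (hg.eventually (by simp)).mono fun q hq =>
      (L.hasFDerivAt.comp q (hq.differentiableAt two_ne_zero).hasFDerivAt).fderiv
  have hg' : HasFDerivAt (fderiv ℝ g) (fderiv ℝ (fderiv ℝ g) p) p :=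
    ((hg.fderiv_right (m := 1) (by norm_num)).differentiableAt one_ne_zero).hasFDerivAt
  have hL := (ContinuousLinearMap.compL ℝ (ℝ × ℝ) E F L).hasFDerivAt.comp p hg'
  exact congrArg (fun T => T (0, 1) (1, 0)) (hL.congr_of_eventuallyEq hfderiv).fderiv

lemma mixedDeriv_sub {E : Type*} [NormedAddCommGroup E] [NormedSpace ℝ E] {f g : ℝ × ℝ → E}
    {p : ℝ × ℝ} (hf : ContDiffAt ℝ 2 f p) (hg : ContDiffAt ℝ 2 g p) :
    mixedDeriv (fun q => f q - g q) p = mixedDeriv f p - mixedDeriv g p := by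
  have h := hf.prodMk hg
  have hfst := mixedDeriv_clm_comp (ContinuousLinearMap.fst ℝ E E) h
  have hsnd := mixedDeriv_clm_comp (ContinuousLinearMap.snd ℝ E E) h
  have hsub := mixedDeriv_clm_comp
    (ContinuousLinearMap.fst ℝ E E - ContinuousLinearMap.snd ℝ E E) h
  simp only [ContinuousLinearMap.coe_fst', ContinuousLinearMap.coe_snd', sub_apply]
    at hfst hsnd hsub
  rw [hfst, hsnd, hsub]

/-- The real-linear part `L` (real or imaginary part) of a complex kernel `w` given in the
characteristic coordinates, as a function of the original variables. -/
noncomputable def charPart (L : ℂ →L[ℝ] ℝ) (w : ℝ × ℝ → ℝ → ℂ) (x y t : ℝ) : ℝ :=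
  L (w (x + y, x - y) t)

lemma exists_charPart_eq (k kc : ℝ → ℝ → ℝ → ℝ) :
    ∃ w, charPart Complex.reCLM w = k ∧ charPart Complex.imCLM w = kc := by
  refine ⟨fun p t => ⟨k ((p.1 + p.2) / 2) ((p.1 - p.2) / 2) t,
    kc ((p.1 + p.2) / 2) ((p.1 - p.2) / 2) t⟩, ?_, ?_⟩ <;>
  · ext x y t
    simp [charPart]

section charPart

variable {w : ℝ × ℝ → ℝ → ℂ} {x y t : ℝ}

lemma pXX_charPart (L : ℂ →L[ℝ] ℝ) (hw : ContDiffAt ℝ 2 (fun p => w p t) (x + y, x - y)) :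
    pXX (charPart L w) x y t
      = pYY (charPart L w) x y t + 4 * L (mixedDeriv (fun p => w p t) (x + y, x - y)) := by
  have hwave := deriv_deriv_sub_deriv_deriv_eq_four_mixedDeriv (L.contDiff.contDiffAt.comp _ hw)
  rw [← mixedDeriv_clm_comp L hw, ← smul_eq_mul (4 : ℝ)]
  exact sub_eq_iff_eq_add'.1 hwave

lemma pT_charPart (L : ℂ →L[ℝ] ℝ) (hw : DifferentiableAt ℝ (w (x + y, x - y)) t) :
    pT (charPart L w) x y t = L (deriv (w (x + y, x - y)) t) :=
  (L.hasFDerivAt.comp_hasDerivAt t hw.hasDerivAt).deriv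

lemma kernel_equations_iff {b c r s : ℝ} (hw : ContDiffAt ℝ 2 (fun p => w p t) (x + y, x - y))
    (hwt : DifferentiableAt ℝ (w (x + y, x - y)) t) :
    (pXX (charPart Complex.reCLM w) x y t
          = pYY (charPart Complex.reCLM w) x y t + b * charPart Complex.reCLM w x y t
            + c * charPart Complex.imCLM w x y t + r * pT (charPart Complex.reCLM w) x y t
            + -s * pT (charPart Complex.imCLM w) x y t
        ∧ pXX (charPart Complex.imCLM w) x y t
          = pYY (charPart Complex.imCLM w) x y t - c * charPart Complex.reCLM w x y t
            + b * charPart Complex.imCLM w x y t + r * pT (charPart Complex.imCLM w) x y t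
            + s * pT (charPart Complex.reCLM w) x y t)
      ↔ 4 * mixedDeriv (fun p => w p t) (x + y, x - y)
        = (b - Complex.I * c) * w (x + y, x - y) t
          + (r + Complex.I * s) * deriv (w (x + y, x - y)) t := by
  simp only [pXX_charPart _ hw, pT_charPart _ hwt, charPart, Complex.reCLM_apply,
    Complex.imCLM_apply, Complex.ext_iff, Complex.add_re, Complex.add_im, Complex.sub_re,
    Complex.sub_im, Complex.mul_re, Complex.mul_im, Complex.ofReal_re, Complex.ofReal_im,
    Complex.I_re, Complex.I_im, Complex.re_ofNat, Complex.im_ofNat]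
  constructor <;> rintro ⟨hre, him⟩ <;> constructor <;> linarith

lemma add_sub_mem_charTriangle (h : (x, y) ∈ Omega) : (x + y, x - y) ∈ charTriangle := by
  obtain ⟨h₁, h₂, h₃⟩ : 0 ≤ y ∧ y ≤ x ∧ x ≤ 1 := h
  exact ⟨by simpa using h₂, by simp only; linarith, by simp only; linarith⟩

lemma exists_mem_Omega_of_mem_charTriangle {p : ℝ × ℝ} (hp : p ∈ charTriangle) :
    ∃ x y, (x, y) ∈ Omega ∧ p = (x + y, x - y) := by
  obtain ⟨h₁, h₂, h₃⟩ := hp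
  refine ⟨(p.1 + p.2) / 2, (p.1 - p.2) / 2, ⟨?_, ?_, ?_⟩, by ext <;> simp only <;> ring⟩ <;>
    simp only <;> linarith

end charPart

namespace IsDirichletKernelSol

variable {β βc : ℝ → ℝ → ℝ → ℝ} {r s t₀ : ℝ} {w : ℝ × ℝ → ℝ → ℂ}
  (hw : IsDirichletKernelSol β βc r (-s) r s t₀ (charPart Complex.reCLM w)
    (charPart Complex.imCLM w)) {p : ℝ × ℝ} {t : ℝ}

include hw

lemma contDiffOn_of_charPart (ht : t ∈ Ioo 0 t₀) :
    ContDiffOn ℝ 2 (fun p => w p t) charTriangle := by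
  have hwt : ContDiffOn ℝ 2 (fun p : ℝ × ℝ => w (p.1 + p.2, p.1 - p.2) t) Omega :=
    (Complex.equivRealProdCLM.symm.contDiff.comp_contDiffOn
      ((hw.1 t ht).prodMk (hw.2.1 t ht))).congr
        fun p _ => (Complex.equivRealProdCLM.symm_apply_apply _).symm
  have hφ : ContDiff ℝ 2 fun p : ℝ × ℝ => ((p.1 + p.2) / 2, (p.1 - p.2) / 2) := by fun_prop
  refine (hwt.comp hφ.contDiffOn fun p hp => ?_).congr fun p hp => ?_
  all_goals obtain ⟨x, y, hxy, rfl⟩ := exists_mem_Omega_of_mem_charTriangle hp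
  · simpa using hxy
  · simp

lemma contDiffAt_of_charPart (hp : p ∈ interior charTriangle) (ht : t ∈ Ioo 0 t₀) :
    ContDiffAt ℝ 2 (fun p => w p t) p :=
  (hw.contDiffOn_of_charPart ht).contDiffAt (mem_interior_iff_mem_nhds.1 hp)

lemma differentiableAt_of_charPart (hp : p ∈ charTriangle) (ht : t ∈ Ioo 0 t₀) :
    DifferentiableAt ℝ (w p) t := by
  obtain ⟨x, y, hxy, rfl⟩ := exists_mem_Omega_of_mem_charTriangle hp
  obtain ⟨hre, him⟩ := hw.2.2.1 x y hxy t ht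
  exact Complex.equivRealProdCLM.symm.differentiableAt.comp t (hre.prodMk him)

lemma four_mul_mixedDeriv {x y : ℝ} (hxy : (x, y) ∈ Omega)
    (hint : (x + y, x - y) ∈ interior charTriangle) (ht : t ∈ Ioo 0 t₀) :
    4 * mixedDeriv (fun p => w p t) (x + y, x - y)
      = (β x y t - Complex.I * βc x y t) * w (x + y, x - y) t
        + (r + Complex.I * s) * deriv (w (x + y, x - y)) t :=
  (kernel_equations_iff (hw.contDiffAt_of_charPart hint ht)
    (hw.differentiableAt_of_charPart (interior_subset hint) ht)).1 (hw.2.2.2.1 x y hxy t ht)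

end IsDirichletKernelSol

/-- `b` extends the complex potential `β - iβ_c`, written in characteristic coordinates, to the
whole plane and to complex times in the unit disc. -/
structure IsComplexPotential (β βc : ℝ → ℝ → ℝ → ℝ) (b : ℝ × ℝ → ℂ → ℂ) : Prop where
  isHolomorphicFamily : IsHolomorphicFamily (ball 0 1) b
  exists_norm_le : ∃ B, ∀ p, ∀ z ∈ ball (0 : ℂ) 1, ‖b p z‖ ≤ B / (1 - ‖z‖)
  contDiff : ∀ t ∈ Ico (0 : ℝ) 1, ContDiff ℝ 1 fun p => b p t
  eq_sub : ∀ x ∈ Icc (0 : ℝ) 1, ∀ y ∈ Icc (0 : ℝ) 1, ∀ t ∈ Ico (0 : ℝ) 1,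
    b (x + y, x - y) t = β x y t - Complex.I * βc x y t

namespace IsComplexPotential

variable {β βc : ℝ → ℝ → ℝ → ℝ} {b : ℝ × ℝ → ℂ → ℂ} {r s t₀ : ℝ}

lemma integral_eq (hb : IsComplexPotential β βc b) {x t : ℝ} (hx : x ∈ Icc (0 : ℝ) 1)
    (ht : t ∈ Ico (0 : ℝ) 1) : ∫ τ in (0 : ℝ)..x + x, -b (τ, 0) t / 4
      = ⟨-(1 / 2) * ∫ γ in (0 : ℝ)..x, β γ γ t, (1 / 2) * ∫ γ in (0 : ℝ)..x, βc γ γ t⟩ := by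
  have hcont : Continuous fun γ : ℝ => b (2 * γ, 0) t :=
    (hb.contDiff t ht).continuous.comp (by fun_prop)
  have heq : ∀ γ ∈ uIcc 0 x, b (2 * γ, 0) t = β γ γ t - Complex.I * βc γ γ t := fun γ hγ => by
    rw [uIcc_of_le hx.1] at hγ
    have hγ' : γ ∈ Icc (0 : ℝ) 1 := ⟨hγ.1, hγ.2.trans hx.2⟩
    rw [← hb.eq_sub γ hγ' γ hγ' t ht, sub_self, two_mul]
  have hsubst : ∫ τ in (0 : ℝ)..x + x, -b (τ, 0) t / 4
      = ((-1 / 2 : ℝ) : ℂ) * ∫ γ in (0 : ℝ)..x, b (2 * γ, 0) t := by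
    have := smul_integral_comp_mul_left (a := 0) (b := x) (fun τ => -b (τ, 0) t / 4) 2
    rw [mul_zero, two_mul] at this
    rw [← this, integral_div, integral_neg, Complex.real_smul]
    push_cast
    ring
  rw [hsubst]
  refine Complex.ext ?_ ?_
  · have hre := Complex.reCLM.intervalIntegral_comp_comm
      (hcont.intervalIntegrable (μ := MeasureTheory.volume) 0 x)
    rw [Complex.re_ofReal_mul, ← Complex.reCLM_apply (∫ γ in _.._, _), ← hre,
      integral_congr (g := fun γ => β γ γ t) fun γ hγ => by simp [heq γ hγ]]
    ring
  · have him := Complex.imCLM.intervalIntegral_comp_comm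
      (hcont.intervalIntegrable (μ := MeasureTheory.volume) 0 x)
    rw [Complex.im_ofReal_mul, ← Complex.imCLM_apply (∫ γ in _.._, _), ← him,
      integral_congr (g := fun γ => -βc γ γ t) fun γ hγ => by simp [heq γ hγ], integral_neg]
    ring

lemma isDirichletKernelSol_charPart (hb : IsComplexPotential β βc b) (ht₀ : t₀ ≤ 1)
    {w : ℝ × ℝ → ℂ → ℂ} (hw : IsHolomorphicFamily (ball 0 1) w)
    (heq : ∀ z ∈ ball (0 : ℂ) 1, ∀ p, w p z = goursat (fun τ => -b (τ, 0) z / 4)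
      (fun q => kernelSource b (r + Complex.I * s) w q z) p) :
    IsDirichletKernelSol β βc r (-s) r s t₀ (charPart Complex.reCLM fun p t => w p t)
      (charPart Complex.imCLM fun p t => w p t) := by
  have hball {t : ℝ} (ht : t ∈ Ioo 0 t₀) : (t : ℂ) ∈ ball (0 : ℂ) 1 := by
    simpa [abs_of_pos ht.1] using ht.2.trans_le ht₀
  have hIco {t : ℝ} (ht : t ∈ Ioo 0 t₀) : t ∈ Ico (0 : ℝ) 1 := ⟨ht.1.le, ht.2.trans_le ht₀⟩
  have hw₂ {t : ℝ} (ht : t ∈ Ioo 0 t₀) := contDiff_two_of_eq_goursat hb.isHolomorphicFamily hw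
    heq (hball ht) (hb.contDiff t (hIco ht))
  have hwt (p : ℝ × ℝ) {t : ℝ} (ht : t ∈ Ioo 0 t₀) :
      HasDerivAt (fun t : ℝ => w p t) (deriv (w p) t) t :=
    (hw.hasDerivAt Metric.isOpen_ball p (hball ht)).comp_ofReal
  have hchar : ContDiff ℝ 2 fun p : ℝ × ℝ => (p.1 + p.2, p.1 - p.2) := by fun_prop
  refine ⟨fun t ht => ?_, fun t ht => ?_, fun x y _ t ht => ⟨?_, ?_⟩, fun x y hxy t ht => ?_,
    fun x hx t ht => ?_⟩
  · exact (Complex.reCLM.contDiff.comp ((hw₂ ht).1.comp hchar)).contDiffOn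
  · exact (Complex.imCLM.contDiff.comp ((hw₂ ht).1.comp hchar)).contDiffOn
  · exact Complex.reCLM.differentiableAt.comp t (hwt _ ht).differentiableAt
  · exact Complex.imCLM.differentiableAt.comp t (hwt _ ht).differentiableAt
  · refine (kernel_equations_iff (hw₂ ht).1.contDiffAt (hwt _ ht).differentiableAt).2 ?_
    obtain ⟨h₁, h₂, h₃⟩ : 0 ≤ y ∧ y ≤ x ∧ x ≤ 1 := hxy
    rw [(hw₂ ht).2, (hwt _ ht).deriv, kernelSource,
      hb.eq_sub x ⟨h₁.trans h₂, h₃⟩ y ⟨h₁, h₂.trans h₃⟩ t (hIco ht)]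
    ring
  · have hdiag := heq t (hball ht) (x + x, 0)
    rw [goursat_zero_right, hb.integral_eq hx (hIco ht)] at hdiag
    have hzero : w (x, x) t = 0 := (heq t (hball ht) _).trans (goursat_self x)
    simp [charPart, hdiag, hzero]

theorem exists_isDirichletKernelSol (hb : IsComplexPotential β βc b) (r s : ℝ) (ht₀ : t₀ < 1) :
    ∃ k kc, IsDirichletKernelSol β βc r (-s) r s t₀ k kc ∧ ∃ M, ∀ x y, (x, y) ∈ Omega →
      ∀ t ∈ Ioo 0 t₀, |k x y t| ≤ M ∧ |kc x y t| ≤ M := by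
  obtain ⟨B, hB⟩ := hb.exists_norm_le
  obtain ⟨w, hw, heq⟩ :=
    exists_isHolomorphicFamily_eq_goursat hb.isHolomorphicFamily hB (r + Complex.I * s)
  obtain ⟨M, hM⟩ := (isCompact_charTriangle.prod (isCompact_closedBall (0 : ℂ) t₀)
    ).exists_bound_of_continuousOn (hw.continuousOn.mono
      (prod_mono (subset_univ _) (Metric.closedBall_subset_ball ht₀)))
  refine ⟨_, _, hb.isDirichletKernelSol_charPart ht₀.le hw heq, M, fun x y hxy t ht => ?_⟩
  have hMw := hM ((x + y, x - y), (t : ℂ)) ⟨add_sub_mem_charTriangle hxy,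
    by simpa [abs_of_pos ht.1] using ht.2.le⟩
  exact ⟨(Complex.abs_re_le_norm _).trans hMw, (Complex.abs_im_le_norm _).trans hMw⟩

lemma isHomogeneousSolution_sub (hb : IsComplexPotential β βc b) (ht₀ : t₀ ≤ 1)
    {w w' : ℝ × ℝ → ℝ → ℂ}
    (hw : IsDirichletKernelSol β βc r (-s) r s t₀ (charPart Complex.reCLM w)
      (charPart Complex.imCLM w))
    (hw' : IsDirichletKernelSol β βc r (-s) r s t₀ (charPart Complex.reCLM w')
      (charPart Complex.imCLM w')) :
    IsHomogeneousSolution (fun p t => b p t) (r + Complex.I * s) (Ioo 0 t₀)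
      fun p t => w p t - w' p t where
  contDiffOn t ht := (hw.contDiffOn_of_charPart ht).sub (hw'.contDiffOn_of_charPart ht)
  differentiableAt p hp t ht :=
    (hw.differentiableAt_of_charPart hp ht).sub (hw'.differentiableAt_of_charPart hp ht)
  four_mul_mixedDeriv p hp t ht := by
    have hp' := interior_subset hp
    rw [mixedDeriv_sub (hw.contDiffAt_of_charPart hp ht) (hw'.contDiffAt_of_charPart hp ht),
      deriv_fun_sub (hw.differentiableAt_of_charPart hp' ht)
        (hw'.differentiableAt_of_charPart hp' ht)]
    obtain ⟨x, y, hxy, rfl⟩ := exists_mem_Omega_of_mem_charTriangle hp'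
    have ⟨h₁, h₂, h₃⟩ : 0 ≤ y ∧ y ≤ x ∧ x ≤ 1 := hxy
    rw [hb.eq_sub x ⟨h₁.trans h₂, h₃⟩ y ⟨h₁, h₂.trans h₃⟩ t ⟨ht.1.le, ht.2.trans_le ht₀⟩]
    linear_combination hw.four_mul_mixedDeriv hxy hp ht - hw'.four_mul_mixedDeriv hxy hp ht
  eq_zero_right x hx t ht := by
    obtain ⟨hre, him, -⟩ := hw.2.2.2.2 (x / 2) ⟨by linarith [hx.1], by linarith [hx.2]⟩ t ht
    obtain ⟨hre', him', -⟩ := hw'.2.2.2.2 (x / 2) ⟨by linarith [hx.1], by linarith [hx.2]⟩ t ht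
    simp only [charPart, add_halves, sub_self] at hre him hre' him'
    exact sub_eq_zero.2 (Complex.ext (hre.trans hre'.symm) (him.trans him'.symm))
  eq_zero_self x hx t ht := by
    obtain ⟨-, -, hre, him⟩ := hw.2.2.2.2 x hx t ht
    obtain ⟨-, -, hre', him'⟩ := hw'.2.2.2.2 x hx t ht
    simp only [charPart, add_zero, sub_zero] at hre him hre' him'
    exact sub_eq_zero.2 (Complex.ext (hre.trans hre'.symm) (him.trans him'.symm))

theorem eq_of_isDirichletKernelSol (hb : IsComplexPotential β βc b) (hrs : r ≠ 0 ∨ s ≠ 0)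
    (ht₀ : t₀ ≤ 1) {k kc k' kc' : ℝ → ℝ → ℝ → ℝ}
    (hk : IsDirichletKernelSol β βc r (-s) r s t₀ k kc)
    (hk' : IsDirichletKernelSol β βc r (-s) r s t₀ k' kc') {x y t : ℝ} (hxy : (x, y) ∈ Omega)
    (ht : t ∈ Ioo 0 t₀) : k x y t = k' x y t ∧ kc x y t = kc' x y t := by
  obtain ⟨w, rfl, rfl⟩ := exists_charPart_eq k kc
  obtain ⟨w', rfl, rfl⟩ := exists_charPart_eq k' kc'
  have hc : (r + Complex.I * s : ℂ) ≠ 0 := fun h =>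
    hrs.elim (· (by simpa using congrArg Complex.re h)) (· (by simpa using congrArg Complex.im h))
  have hww' : w (x + y, x - y) t = w' (x + y, x - y) t :=
    sub_eq_zero.1 ((hb.isHomogeneousSolution_sub ht₀ hk hk').eq_zero hc (by norm_num) ht₀
      hb.isHolomorphicFamily (add_sub_mem_charTriangle hxy) ht)
  simp only [charPart, hww', and_self]

end IsComplexPotential

lemma le_mul_exp_of_mem_Omega {M x y : ℝ} (hM : 0 ≤ M) (hxy : (x, y) ∈ Omega) :
    M ≤ M * Real.exp (M * (x ^ 2 - y ^ 2)) := by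
  obtain ⟨hy, hyx, -⟩ : 0 ≤ y ∧ y ≤ x ∧ x ≤ 1 := hxy
  have : y ^ 2 ≤ x ^ 2 := by gcongr
  exact le_mul_of_one_le_right hM (Real.one_le_exp (mul_nonneg hM (sub_nonneg.2 this)))

lemma SpaceC1TimeAnalytic.exists_isHolomorphicFamily_const_mul_sub {f g : ℝ → ℝ → ℝ}
    (hf : SpaceC1TimeAnalytic f) (hg : SpaceC1TimeAnalytic g) (c : ℂ) :
    ∃ (F : ℝ → ℂ → ℂ) (C : ℝ), IsHolomorphicFamily (ball 0 1) F ∧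
      (∀ x, ∀ z ∈ ball (0 : ℂ) 1, ‖F x z‖ ≤ C / (1 - ‖z‖)) ∧
      (∀ t ∈ Ico (0 : ℝ) 1, ContDiff ℝ 1 fun x => F x t) ∧
      ∀ x ∈ Icc (0 : ℝ) 1, ∀ t ∈ Ico (0 : ℝ) 1, F x t = c * (f x t - Complex.I * g x t) := by
  obtain ⟨F, A, hF, hFA, hF₁, hFf⟩ := hf.exists_isHolomorphicFamily
  obtain ⟨G, B, hG, hGB, hG₁, hGg⟩ := hg.exists_isHolomorphicFamily
  refine ⟨fun x z => c * (F x z + -Complex.I * G x z), ‖c‖ * (A + B),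
    (hF.add (hG.const_mul _)).const_mul c, fun x z hz => ?_, fun t ht => ?_, fun x hx t ht => ?_⟩
  · calc ‖c * (F x z + -Complex.I * G x z)‖ ≤ ‖c‖ * (‖F x z‖ + ‖G x z‖) := by
          rw [norm_mul]
          gcongr
          exact (norm_add_le _ _).trans_eq (by simp)
      _ ≤ ‖c‖ * (A / (1 - ‖z‖) + B / (1 - ‖z‖)) := by
          gcongr
          exacts [hFA x z hz, hGB x z hz]
      _ = ‖c‖ * (A + B) / (1 - ‖z‖) := by ring
  · exact contDiff_const.mul ((hF₁ t ht).add (contDiff_const.mul (hG₁ t ht)))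
  · simp only [hFf x hx t ht, hGg x hx t ht]
    ring

theorem exists_isComplexPotential (aR aI : ℝ) {bR bI fR fI : ℝ → ℝ → ℝ}
    (hbR : SpaceC1TimeAnalytic bR) (hbI : SpaceC1TimeAnalytic bI)
    (hfR : SpaceC1TimeAnalytic fR) (hfI : SpaceC1TimeAnalytic fI) {β βc : ℝ → ℝ → ℝ → ℝ}
    (hβ : ∀ x y t : ℝ, β x y t
      = (aR * (bR y t - fR x t) + aI * (bI y t - fI x t)) / (aR ^ 2 + aI ^ 2))
    (hβc : ∀ x y t : ℝ, βc x y t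
      = (aR * (bI y t - fI x t) - aI * (bR y t - fR x t)) / (aR ^ 2 + aI ^ 2)) :
    ∃ b, IsComplexPotential β βc b := by
  -- the inverse of the conjugate of the diffusion coefficient `aR + i aI`
  let c : ℂ := ⟨aR / (aR ^ 2 + aI ^ 2), aI / (aR ^ 2 + aI ^ 2)⟩
  obtain ⟨F, A, hF, hFA, hF₁, hFeq⟩ := hbR.exists_isHolomorphicFamily_const_mul_sub hbI c
  obtain ⟨G, B, hG, hGB, hG₁, hGeq⟩ := hfR.exists_isHolomorphicFamily_const_mul_sub hfI (-c)
  refine ⟨fun p z => F ((p.1 - p.2) / 2) z + G ((p.1 + p.2) / 2) z,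
    (hF.comp (by fun_prop)).add (hG.comp (by fun_prop)), ⟨A + B, fun p z hz => ?_⟩,
    fun t ht => ?_, fun x hx y hy t ht => ?_⟩
  · rw [add_div A]
    exact norm_add_le_of_le (hFA _ z hz) (hGB _ z hz)
  · exact ((hF₁ t ht).comp (by fun_prop)).add ((hG₁ t ht).comp (by fun_prop))
  · rw [show (x + y - (x - y)) / 2 = y by ring, show (x + y + (x - y)) / 2 = x by ring,
      hFeq y hy t ht, hGeq x hx t ht]
    refine Complex.ext ?_ ?_
    all_goals
      simp only [c, Complex.add_re, Complex.add_im, Complex.sub_re, Complex.sub_im, Complex.mul_re,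
        Complex.mul_im, Complex.neg_re, Complex.neg_im, Complex.ofReal_re, Complex.ofReal_im,
        Complex.I_re, Complex.I_im, hβ, hβc]
      ring

theorem dirichlet_kernel_existence_uniqueness_bound_general
    (aR aI : ℝ) (ha : aR ≠ 0 ∨ aI ≠ 0)
    (p₁ p₂ q₁ q₂ : ℝ)
    (hp₁ : p₁ = aR / (aR ^ 2 + aI ^ 2)) (hq₁ : q₁ = aR / (aR ^ 2 + aI ^ 2))
    (hp₂ : p₂ = -aI / (aR ^ 2 + aI ^ 2)) (hq₂ : q₂ = aI / (aR ^ 2 + aI ^ 2))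
    (bR bI fR fI : ℝ → ℝ → ℝ)
    (hbR : SpaceC1TimeAnalytic bR) (hbI : SpaceC1TimeAnalytic bI)
    (hfR : SpaceC1TimeAnalytic fR) (hfI : SpaceC1TimeAnalytic fI)
    (β βc : ℝ → ℝ → ℝ → ℝ)
    (hβ : ∀ x y t : ℝ, β x y t
      = (aR * (bR y t - fR x t) + aI * (bI y t - fI x t)) / (aR ^ 2 + aI ^ 2))
    (hβc : ∀ x y t : ℝ, βc x y t
      = (aR * (bI y t - fI x t) - aI * (bR y t - fR x t)) / (aR ^ 2 + aI ^ 2))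
    (t₀ : ℝ) (ht₀ : t₀ < 1) :
    ∃ k kc : ℝ → ℝ → ℝ → ℝ,
      IsDirichletKernelSol β βc p₁ p₂ q₁ q₂ t₀ k kc
      ∧ (∀ k' kc' : ℝ → ℝ → ℝ → ℝ,
          IsDirichletKernelSol β βc p₁ p₂ q₁ q₂ t₀ k' kc' →
          ∀ x y : ℝ, (x, y) ∈ Omega → ∀ t ∈ Ioo (0:ℝ) t₀,
            k' x y t = k x y t ∧ kc' x y t = kc x y t)
      ∧ ∃ M : ℝ, 0 < M ∧ ∀ x y : ℝ, (x, y) ∈ Omega → ∀ t ∈ Ioo (0:ℝ) t₀,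
          |k x y t| ≤ M * Real.exp (M * (x ^ 2 - y ^ 2))
          ∧ |kc x y t| ≤ M * Real.exp (M * (x ^ 2 - y ^ 2)) := by
  have hD : aR ^ 2 + aI ^ 2 ≠ 0 := by rcases ha with h | h <;> positivity
  have hrs : aR / (aR ^ 2 + aI ^ 2) ≠ 0 ∨ aI / (aR ^ 2 + aI ^ 2) ≠ 0 :=
    ha.imp (div_ne_zero · hD) (div_ne_zero · hD)
  rw [neg_div] at hp₂
  subst hp₁ hq₁ hp₂ hq₂
  obtain ⟨b, hb⟩ := exists_isComplexPotential aR aI hbR hbI hfR hfI hβ hβc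
  obtain ⟨k, kc, hk, M, hM⟩ := hb.exists_isDirichletKernelSol _ _ ht₀
  refine ⟨k, kc, hk, fun k' kc' hk' x y hxy t ht =>
    hb.eq_of_isDirichletKernelSol hrs ht₀.le hk' hk hxy ht, max M 1, by positivity,
    fun x y hxy t ht => ?_⟩
  have hexp := (le_max_left M 1).trans (le_mul_exp_of_mem_Omega (by positivity) hxy)
  exact (hM x y hxy t ht).imp hexp.trans' hexp.trans'

/-- existence, uniqueness and exponential bound for the backstepping
kernel pair `(k, k_c)` of the Dirichlet boundary-control problem. -/
theorem dirichlet_kernel_existence_uniqueness_bound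
    (aR aI : ℝ) (haR : 0 < aR)
    (p₁ p₂ q₁ q₂ : ℝ)
    (hp₁ : p₁ = aR / (aR ^ 2 + aI ^ 2)) (hq₁ : q₁ = aR / (aR ^ 2 + aI ^ 2))
    (hp₂ : p₂ = -aI / (aR ^ 2 + aI ^ 2)) (hq₂ : q₂ = aI / (aR ^ 2 + aI ^ 2))
    (bR bI fR fI : ℝ → ℝ → ℝ)
    (hbR : SpaceC1TimeAnalytic bR) (hbI : SpaceC1TimeAnalytic bI)
    (hfR : SpaceC1TimeAnalytic fR) (hfI : SpaceC1TimeAnalytic fI)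
    (β βc : ℝ → ℝ → ℝ → ℝ)
    (hβ : ∀ x y t : ℝ, β x y t
      = (aR * (bR y t - fR x t) + aI * (bI y t - fI x t)) / (aR ^ 2 + aI ^ 2))
    (hβc : ∀ x y t : ℝ, βc x y t
      = (aR * (bI y t - fI x t) - aI * (bR y t - fR x t)) / (aR ^ 2 + aI ^ 2))
    (t₀ : ℝ) (ht₀ : t₀ ∈ Ioo (0:ℝ) 1) :
    ∃ k kc : ℝ → ℝ → ℝ → ℝ,
      IsDirichletKernelSol β βc p₁ p₂ q₁ q₂ t₀ k kc
      ∧ (∀ k' kc' : ℝ → ℝ → ℝ → ℝ,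
          IsDirichletKernelSol β βc p₁ p₂ q₁ q₂ t₀ k' kc' →
          ∀ x y : ℝ, (x, y) ∈ Omega → ∀ t ∈ Ioo (0:ℝ) t₀,
            k' x y t = k x y t ∧ kc' x y t = kc x y t)
      ∧ ∃ M : ℝ, 0 < M ∧ ∀ x y : ℝ, (x, y) ∈ Omega → ∀ t ∈ Ioo (0:ℝ) t₀,
          |k x y t| ≤ M * Real.exp (M * (x ^ 2 - y ^ 2))
          ∧ |kc x y t| ≤ M * Real.exp (M * (x ^ 2 - y ^ 2)) :=
  dirichlet_kernel_existence_uniqueness_bound_general aR aI (.inl haR.ne') p₁ p₂ q₁ q₂ hp₁ hq₁ hp₂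
    hq₂ bR bI fR fI hbR hbI hfR hfI β βc hβ hβc t₀ ht₀.2
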